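/- arXiv:math/0007075 — 8 statements merged into one kernel-verified Lean document; each statement's English description precedes it below -/
import Mathlib

section
/- Let p and q be coprime real polynomials in two variables, neither of them zero. Then the set of common zeros {v ∈ ℝ² : p(v) = 0 and q(v) = 0} is finite. -/
open MvPolynomial Filter Topology

/-- Evaluation of a two-variable real polynomial at a point of `ℝ²`. -/
noncomputable def pev (p : MvPolynomial (Fin 2) ℝ) (v : ℝ × ℝ) : ℝ :=
  MvPolynomial.eval ![v.1, v.2] p

theorem aux_elim {R : Type} [CommRing R] [IsDomain R] [UniqueFactorizationMonoid R]
    (f g : Polynomial R) (hf : f ≠ 0)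
    (hcop : ∀ d : Polynomial R, d ∣ f → d ∣ g → IsUnit d) :
    ∃ (r : R) (a b : Polynomial R), r ≠ 0 ∧ f * a + g * b = Polynomial.C r := by
  classical
  let K := FractionRing R
  have : Nonempty (NormalizedGCDMonoid R) := inferInstance
  obtain ⟨_⟩ := this
  have hinj : Function.Injective (algebraMap R K) := IsFractionRing.injective R K
  have hf' : f.map (algebraMap R K) ≠ 0 := by
    rwa [Ne, Polynomial.map_eq_zero_iff hinj]
  have hK : IsCoprime (f.map (algebraMap R K)) (g.map (algebraMap R K)) := by
    rw [← isRelPrime_iff_isCoprime]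
    intro d hdf hdg
    have hd0 : d ≠ 0 := fun h => hf' (by simpa [h] using hdf)
    apply Polynomial.isUnit_or_eq_zero_of_isUnit_integerNormalization_primPart (R := R) hd0
    obtain ⟨c, c0, hc⟩ := IsLocalization.integerNormalization_spec (nonZeroDivisors R) d
    rw [Algebra.smul_def, Polynomial.algebraMap_apply] at hc
    have hcu : IsUnit (Polynomial.C (algebraMap R K c)) := by
      rw [Polynomial.isUnit_C, isUnit_iff_ne_zero]
      exact fun h => nonZeroDivisors.ne_zero c0 (hinj (by simpa using h))
    have key : ∀ h : Polynomial R, d ∣ h.map (algebraMap R K) →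
        (IsLocalization.integerNormalization (nonZeroDivisors R) d).primPart ∣ h := by
      intro h hdh
      apply (Polynomial.isPrimitive_primPart _).dvd_of_fraction_map_dvd_fraction_map (K := K)
      refine (Polynomial.map_dvd _ (Polynomial.primPart_dvd _)).trans ?_
      rw [hc]
      exact (hcu.mul_left_dvd).2 hdh
    exact hcop _ (key f hdf) (key g hdg)
  by_cases H : f.natDegree ≠ 0 ∨ g.natDegree ≠ 0
  · obtain ⟨a, b, -, -, h⟩ :=
      Polynomial.exists_mul_add_mul_eq_C_resultant f g le_rfl le_rfl H
    refine ⟨_, a, b, ?_, h⟩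
    intro h0
    have := Polynomial.resultant_map_map f g f.natDegree g.natDegree (algebraMap R K)
    rw [h0, map_zero] at this
    have h2 : Polynomial.resultant (f.map (algebraMap R K)) (g.map (algebraMap R K)) = 0 := by
      rwa [Polynomial.natDegree_map_eq_of_injective hinj,
        Polynomial.natDegree_map_eq_of_injective hinj]
    exact (Polynomial.resultant_eq_zero_iff.1 h2).2 hK
  · push Not at H
    have h := Polynomial.eq_C_of_natDegree_eq_zero H.1
    refine ⟨f.coeff 0, 1, 0, ?_, by rw [← h]; ring⟩
    intro h0
    rw [h0] at h
    exact hf (by simpa using h)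

theorem aux_snd (p q : MvPolynomial (Fin 2) ℝ) (hp : p ≠ 0)
    (hcop : ∀ d : MvPolynomial (Fin 2) ℝ, d ∣ p → d ∣ q → IsUnit d) :
    ∃ u : Polynomial ℝ, u ≠ 0 ∧ ∀ x y : ℝ, eval ![x, y] p = 0 → eval ![x, y] q = 0 →
      u.eval y = 0 := by
  let e := finSuccEquiv ℝ 1
  obtain ⟨r, a, b, hr, h⟩ := aux_elim (e p) (e q) (by simpa using hp) (by
    intro d h1 h2
    have := hcop (e.symm d) (by simpa using map_dvd e.symm h1)
      (by simpa using map_dvd e.symm h2)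
    simpa using this.map e)
  refine ⟨uniqueAlgEquiv ℝ (Fin 1) r,
    by rwa [Ne, EmbeddingLike.map_eq_zero_iff], ?_⟩
  intro x y hx hy
  have hev : ∀ s : MvPolynomial (Fin 2) ℝ,
      eval ![y] (Polynomial.eval (C x) (e s)) = eval ![x, y] s := by
    intro s
    rw [eval_polynomial_eval_finSuccEquiv]
    congr 2
    funext i
    fin_cases i
    · simp
    · rfl
  have h3 := congrArg (fun t => eval ![y] (Polynomial.eval (C x) t)) h
  simp only [Polynomial.eval_add, Polynomial.eval_mul, map_add, map_mul, hev, hx, hy,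
    Polynomial.eval_C, zero_mul, add_zero] at h3
  have h4 : ∀ s : MvPolynomial (Fin 1) ℝ,
      (uniqueAlgEquiv ℝ (Fin 1) s).eval y = eval ![y] s := by
    intro s
    induction s using MvPolynomial.induction_on with
    | C a => simp
    | add p q hp hq => simp only [map_add, Polynomial.eval_add, hp, hq]
    | mul_X p i hp =>
      rw [map_mul, Polynomial.eval_mul, hp]
      simp
  rw [h4, ← h3]

/-- Coprime nonzero real polynomials in two variables have finitely many common zeros. -/
theorem common_zeros_finite (p q : MvPolynomial (Fin 2) ℝ) (hp : p ≠ 0) (hq : q ≠ 0)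
    (hcop : ∀ d : MvPolynomial (Fin 2) ℝ, d ∣ p → d ∣ q → IsUnit d) :
    {v : ℝ × ℝ | pev p v = 0 ∧ pev q v = 0}.Finite := by
  obtain ⟨u, hu, hu'⟩ := aux_snd p q hp hcop
  let e := renameEquiv ℝ (Equiv.swap (0 : Fin 2) 1)
  obtain ⟨w, hw, hw'⟩ := aux_snd (e p) (e q) (by rwa [Ne, EmbeddingLike.map_eq_zero_iff]) (by
    intro d h1 h2
    have := hcop (e.symm d) (by simpa only [AlgEquiv.symm_apply_apply] using map_dvd e.symm h1)
      (by simpa only [AlgEquiv.symm_apply_apply] using map_dvd e.symm h2)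
    simpa only [AlgEquiv.apply_symm_apply] using this.map e)
  have hev : ∀ (s : MvPolynomial (Fin 2) ℝ) (x y : ℝ),
      eval ![y, x] (e s) = eval ![x, y] s := by
    intro s x y
    simp only [e, renameEquiv_apply, eval_rename]
    congr 2
    funext i
    fin_cases i <;> simp
  refine ((w.roots.toFinset.finite_toSet).prod (u.roots.toFinset.finite_toSet)).subset ?_
  rintro ⟨x, y⟩ ⟨h1, h2⟩
  simp only [pev] at h1 h2
  simp only [Set.mem_prod, Finset.mem_coe, Multiset.mem_toFinset, Polynomial.mem_roots hu,
    Polynomial.mem_roots hw, Polynomial.IsRoot.def]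
  exact ⟨hw' y x (by rw [hev, h1]) (by rw [hev, h2]), hu' x y h1 h2⟩
end

section
/- Let f = p/q be a rational function of two real variables. Then the set of points of bounded discontinuity of f is finite. (Every such point is a common zero of p and q, and there are only finitely many common zeros.) -/
open MvPolynomial Filter Topology

/-- `p/q` is bounded near `v₀`. -/
def BoundedNear (p q : MvPolynomial (Fin 2) ℝ) (v₀ : ℝ × ℝ) : Prop :=
  ∃ U ∈ nhds v₀, ∃ M : ℝ, ∀ v ∈ U, pev q v ≠ 0 → |pev p v / pev q v| ≤ M

theorem elim_aux {R : Type*} [CommRing R] [IsDomain R] [NormalizedGCDMonoid R]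
    (p q : Polynomial R) (hq : q ≠ 0)
    (hcop : ∀ d : Polynomial R, d ∣ p → d ∣ q → IsUnit d) :
    ∃ a b : Polynomial R, ∃ r : R, r ≠ 0 ∧ a * p + b * q = Polynomial.C r := by
  classical
  let K := FractionRing R
  let φ := algebraMap R K
  have hφ : Function.Injective φ := IsFractionRing.injective R K
  have hc : IsCoprime (p.map φ) (q.map φ) := by
    rw [← EuclideanDomain.gcd_isUnit_iff]
    set g := EuclideanDomain.gcd (p.map φ) (q.map φ) with hg
    have hgp : g ∣ p.map φ := EuclideanDomain.gcd_dvd_left _ _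
    have hgq : g ∣ q.map φ := EuclideanDomain.gcd_dvd_right _ _
    have hq0 : q.map φ ≠ 0 := (Polynomial.map_ne_zero_iff hφ).2 hq
    have hg0 : g ≠ 0 := fun h => hq0 (by rw [h] at hgq; exact zero_dvd_iff.1 hgq)
    apply Polynomial.isUnit_or_eq_zero_of_isUnit_integerNormalization_primPart (R := R) hg0
    set e := IsLocalization.integerNormalization (nonZeroDivisors R) g with he
    have hdg : e.primPart.map φ ∣ g := by
      obtain ⟨c, c0, hc⟩ := IsLocalization.integerNormalization_spec (nonZeroDivisors R) g
      have h1 : e.primPart.map φ ∣ e.map φ :=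
        Polynomial.map_dvd _ (Polynomial.primPart_dvd e)
      have h2 : e.map φ = Polynomial.C (φ c) * g := by
        rw [he, hc, Algebra.smul_def, Polynomial.algebraMap_apply]
      rw [h2] at h1
      have hu : IsUnit (Polynomial.C (φ c)) := by
        rw [Polynomial.isUnit_C]
        exact (IsLocalization.map_units K ⟨c, c0⟩)
      exact (hu.dvd_mul_left).1 h1
    exact hcop _
      (e.isPrimitive_primPart.dvd_of_fraction_map_dvd_fraction_map (K := K) (hdg.trans hgp))
      (e.isPrimitive_primPart.dvd_of_fraction_map_dvd_fraction_map (K := K) (hdg.trans hgq))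
  obtain ⟨a, b, hab⟩ := hc
  obtain ⟨s, hs, hsa⟩ := IsLocalization.integerNormalization_spec (nonZeroDivisors R) a
  obtain ⟨t, ht, htb⟩ := IsLocalization.integerNormalization_spec (nonZeroDivisors R) b
  refine ⟨Polynomial.C t * IsLocalization.integerNormalization (nonZeroDivisors R) a,
    Polynomial.C s * IsLocalization.integerNormalization (nonZeroDivisors R) b, s * t,
    mul_ne_zero (nonZeroDivisors.ne_zero hs) (nonZeroDivisors.ne_zero ht), ?_⟩
  apply Polynomial.map_injective φ hφ
  rw [Algebra.smul_def, Polynomial.algebraMap_apply] at hsa htb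
  simp only [Polynomial.map_add, Polynomial.map_mul, Polynomial.map_C, map_mul]
  change Polynomial.C (φ t) * Polynomial.map (algebraMap R K) _ * _ +
    Polynomial.C (φ s) * Polynomial.map (algebraMap R K) _ * _ = _
  rw [hsa, htb]
  change Polynomial.C (φ t) * (Polynomial.C (φ s) * a) * _ +
    Polynomial.C (φ s) * (Polynomial.C (φ t) * b) * _ = _
  linear_combination (Polynomial.C (φ t) * Polynomial.C (φ s)) * hab

/-- Common zeros have finitely many second coordinates. -/
theorem snd_finite (p q : MvPolynomial (Fin 2) ℝ) (hq : q ≠ 0)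
    (hcop : ∀ d : MvPolynomial (Fin 2) ℝ, d ∣ p → d ∣ q → IsUnit d) :
    {y : ℝ | ∃ x, pev p (x, y) = 0 ∧ pev q (x, y) = 0}.Finite := by
  classical
  let e := finSuccEquiv ℝ 1
  obtain ⟨inst⟩ : Nonempty (NormalizedGCDMonoid (MvPolynomial (Fin 1) ℝ)) := inferInstance
  obtain ⟨a, b, r, hr, hab⟩ := elim_aux (e p) (e q) (by simpa using hq) (by
    intro d hp hd
    have := hcop (e.symm d) (by simpa using map_dvd e.symm hp) (by simpa using map_dvd e.symm hd)
    simpa using this)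
  let f : Polynomial ℝ := aeval (fun _ => Polynomial.X) r
  have hf : ∀ y, f.eval y = eval (fun _ => y) r := by
    intro y
    have : (Polynomial.aeval y).comp (aeval (fun _ : Fin 1 => (Polynomial.X : Polynomial ℝ)))
        = aeval (fun _ : Fin 1 => y) := by
      ext; simp
    have h2 := DFunLike.congr_fun this r
    simpa [f, Polynomial.aeval_def, MvPolynomial.aeval_eq_eval] using h2
  have hf0 : f ≠ 0 := by
    intro h
    apply hr
    apply MvPolynomial.funext
    intro x
    have hx : x = fun _ => x 0 := by
      ext i; rw [Subsingleton.elim i 0]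
    rw [hx, ← hf, h]; simp
  refine (Polynomial.finite_setOfPred_isRoot hf0).subset ?_
  rintro y ⟨x, h1, h2⟩
  change f.eval y = 0
  rw [hf]
  have key : ∀ g : MvPolynomial (Fin 2) ℝ, pev g (x, y)
      = ((e g).map (eval (fun _ => y))).eval x := by
    intro g
    rw [← eval_eq_eval_mv_eval']
    unfold pev
    congr 2
    ext i; fin_cases i <;> rfl
  rw [key] at h1 h2
  have := congrArg (fun g => (g.map (eval (fun _ => y))).eval x) hab
  simp only [Polynomial.map_add, Polynomial.map_mul, Polynomial.eval_add, Polynomial.eval_mul,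
    h1, h2, Polynomial.map_C, Polynomial.eval_C] at this
  simpa using this.symm

theorem pev_swap (p : MvPolynomial (Fin 2) ℝ) (x y : ℝ) :
    pev (rename (Equiv.swap 0 1) p) (y, x) = pev p (x, y) := by
  unfold pev
  rw [eval_rename]
  congr 2
  ext i; fin_cases i <;> simp

theorem fst_finite (p q : MvPolynomial (Fin 2) ℝ) (hq : q ≠ 0)
    (hcop : ∀ d : MvPolynomial (Fin 2) ℝ, d ∣ p → d ∣ q → IsUnit d) :
    {x : ℝ | ∃ y, pev p (x, y) = 0 ∧ pev q (x, y) = 0}.Finite := by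
  let e := renameEquiv ℝ (Equiv.swap (0 : Fin 2) 1)
  have := snd_finite (e p) (e q) (by simpa using hq) (by
    intro d hp hd
    have := hcop (e.symm d) (by simpa using map_dvd e.symm hp) (by simpa using map_dvd e.symm hd)
    simpa using this)
  refine this.subset ?_
  rintro x ⟨y, h1, h2⟩
  exact ⟨y, (pev_swap p x y).trans h1, (pev_swap q x y).trans h2⟩

theorem exists_ne_zero (q : MvPolynomial (Fin 2) ℝ) (hq : q ≠ 0) (v₀ : ℝ × ℝ)
    (U : Set (ℝ × ℝ)) (hU : U ∈ 𝓝 v₀) : ∃ v ∈ U, pev q v ≠ 0 := by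
  by_contra! h
  rw [nhds_prod_eq, Filter.mem_prod_iff] at hU
  obtain ⟨A, hA, B, hB, hAB⟩ := hU
  apply hq
  refine funext_set ![A, B] ?_ ?_
  · intro i
    fin_cases i
    · exact infinite_of_mem_nhds _ hA
    · exact infinite_of_mem_nhds _ hB
  · intro x hx
    have h0 : x 0 ∈ A := hx 0 trivial
    have h1 : x 1 ∈ B := hx 1 trivial
    have := h (x 0, x 1) (hAB ⟨h0, h1⟩)
    unfold pev at this
    rw [map_zero, ← this]
    congr 2
    ext i; fin_cases i <;> rfl

theorem pev_continuous (p : MvPolynomial (Fin 2) ℝ) : Continuous (pev p) := by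
  unfold pev
  refine (MvPolynomial.continuous_eval p).comp (continuous_pi fun i => ?_)
  fin_cases i
  · exact continuous_fst
  · exact continuous_snd

theorem num_zero (p q : MvPolynomial (Fin 2) ℝ) (hq : q ≠ 0) (v₀ : ℝ × ℝ)
    (hb : BoundedNear p q v₀) (h0 : pev q v₀ = 0) : pev p v₀ = 0 := by
  obtain ⟨U, hU, M, hM⟩ := hb
  by_contra hp
  have hev : ∀ᶠ v in 𝓝 v₀, M * |pev q v| < |pev p v| := by
    refine ContinuousAt.eventually_lt ?_ ?_ ?_
    · exact (continuous_const.mul (pev_continuous q).abs).continuousAt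
    · exact (pev_continuous p).abs.continuousAt
    · simpa [h0] using hp
  obtain ⟨v, ⟨hv1, hv2⟩, hv⟩ := exists_ne_zero q hq v₀ _ (inter_mem hU hev)
  have := hM v hv1 hv
  rw [abs_div, div_le_iff₀ (abs_pos.2 hv)] at this
  exact absurd hv2 (not_lt.2 this)

/-- The set of points of bounded discontinuity of a rational function `p/q` is finite. -/
theorem bounded_discontinuity_finite (p q : MvPolynomial (Fin 2) ℝ) (hq : q ≠ 0)
    (hcop : ∀ d : MvPolynomial (Fin 2) ℝ, d ∣ p → d ∣ q → IsUnit d) :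
    {v₀ : ℝ × ℝ | BoundedNear p q v₀ ∧ pev q v₀ = 0}.Finite := by
  refine ((fst_finite p q hq hcop).prod (snd_finite p q hq hcop)).subset ?_
  rintro ⟨x, y⟩ ⟨hb, h0⟩
  have hp := num_zero p q hq _ hb h0
  exact ⟨⟨y, hp, h0⟩, ⟨x, hp, h0⟩⟩
end

section
/- Let G be a nonempty open connected subset of ℝ² and let p, q be coprime real polynomials in two variables with q ≠ 0, such that p/q is bounded on {v ∈ G : q(v) ≠ 0} (i.e. there is M with |p(v)/q(v)| ≤ M for all v ∈ G with q(v) ≠ 0). Then q has constant sign on G: for all a, b ∈ G, q(a)·q(b) ≥ 0. -/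
open MvPolynomial Filter Topology

/-- Elimination: relatively prime polynomials over a UFD combine to a nonzero constant. -/
theorem elim_aux_s3 {R : Type*} [CommRing R] [IsDomain R] [UniqueFactorizationMonoid R]
    (f g : Polynomial R) (hg : g ≠ 0) (h : IsRelPrime f g) :
    ∃ u v : Polynomial R, ∃ r : R, r ≠ 0 ∧ f * u + g * v = Polynomial.C r := by
  classical
  let _ : StrongNormalizationMonoid R := UniqueFactorizationMonoid.strongNormalizationMonoid
  let _ : NormalizedGCDMonoid R := UniqueFactorizationMonoid.toNormalizedGCDMonoid R
  by_cases hdeg : f.natDegree ≠ 0 ∨ g.natDegree ≠ 0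
  · let K := FractionRing R
    have hinj : Function.Injective (algebraMap R K) := IsFractionRing.injective R K
    have hgK : g.map (algebraMap R K) ≠ 0 := by
      rwa [Ne, Polynomial.map_eq_zero_iff hinj]
    have hco : IsCoprime (f.map (algebraMap R K)) (g.map (algebraMap R K)) := by
      rw [← isRelPrime_iff_isCoprime]
      intro d hdf hdg
      have hd0 : d ≠ 0 := fun h0 => hgK (by rw [h0] at hdg; exact zero_dvd_iff.mp hdg)
      apply Polynomial.isUnit_or_eq_zero_of_isUnit_integerNormalization_primPart (R := R) hd0
      set e := (IsLocalization.integerNormalization (nonZeroDivisors R) d).primPart with he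
      have hep : e.IsPrimitive := Polynomial.isPrimitive_primPart _
      have hed : e.map (algebraMap R K) ∣ d := by
        obtain ⟨c, hc⟩ := IsLocalization.integerNormalization_map_to_map (nonZeroDivisors R) d
        have h1 : e.map (algebraMap R K) ∣
            (IsLocalization.integerNormalization (nonZeroDivisors R) d).map (algebraMap R K) :=
          Polynomial.map_dvd _ (Polynomial.primPart_dvd _)
        rw [hc, Algebra.smul_def] at h1
        have hu : IsUnit (algebraMap R (Polynomial K) (c : R)) := by
          rw [Polynomial.algebraMap_apply]
          exact Polynomial.isUnit_C.mpr (isUnit_iff_ne_zero.mpr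
            (by simpa using nonZeroDivisors.coe_ne_zero c))
        exact (hu.dvd_mul_left).mp h1
      exact h (hep.dvd_of_fraction_map_dvd_fraction_map (hed.trans hdf))
        (hep.dvd_of_fraction_map_dvd_fraction_map (hed.trans hdg))
    have hr := Polynomial.resultant_ne_zero _ _ hco
    rw [Polynomial.natDegree_map_eq_of_injective hinj,
      Polynomial.natDegree_map_eq_of_injective hinj, Polynomial.resultant_map_map] at hr
    obtain ⟨u, v, -, -, huv⟩ :=
      Polynomial.exists_mul_add_mul_eq_C_resultant f g le_rfl le_rfl hdeg
    exact ⟨u, v, _, fun h0 => hr (by rw [h0, map_zero]), huv⟩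
  · push Not at hdeg
    have := Polynomial.eq_C_of_natDegree_eq_zero hdeg.2
    refine ⟨0, 1, g.coeff 0, fun h0 => hg (by rw [this, h0, map_zero]), by rw [← this]; simp⟩

theorem finite_snd (p q : MvPolynomial (Fin 2) ℝ) (hq : q ≠ 0) (h : IsRelPrime p q) :
    {y : ℝ | ∃ x : ℝ, pev p (x, y) = 0 ∧ pev q (x, y) = 0}.Finite := by
  let e := MvPolynomial.finSuccEquiv ℝ 1
  have hrel : IsRelPrime (e p) (e q) := by
    apply IsRelPrime.of_map e.symm
    simpa using h
  obtain ⟨u, v, r, hr, huv⟩ := elim_aux_s3 (e p) (e q) (by simpa using hq) hrel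
  by_contra hinf
  apply hr
  apply MvPolynomial.funext_set (fun _ => _) (fun _ => hinf)
  intro s hs
  obtain ⟨x, hx1, hx2⟩ := hs 0 trivial
  have key : ∀ P : MvPolynomial (Fin 2) ℝ, pev P (x, s 0) =
      Polynomial.eval x (Polynomial.map (eval s) (e P)) := by
    intro P
    rw [← MvPolynomial.eval_eq_eval_mv_eval']
    unfold pev
    congr 2
    funext i
    fin_cases i <;> rfl
  have := congrArg (fun P => Polynomial.eval x (Polynomial.map (eval s) P)) huv
  simp only [Polynomial.map_add, Polynomial.map_mul, Polynomial.eval_add, Polynomial.eval_mul,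
    ← key, hx1, hx2, Polynomial.map_C, Polynomial.eval_C] at this
  rw [← this]
  simp

theorem finite_fst (p q : MvPolynomial (Fin 2) ℝ) (hq : q ≠ 0) (h : IsRelPrime p q) :
    {x : ℝ | ∃ y : ℝ, pev p (x, y) = 0 ∧ pev q (x, y) = 0}.Finite := by
  let e := MvPolynomial.renameEquiv ℝ (Equiv.swap (0 : Fin 2) 1)
  have hrel : IsRelPrime (e p) (e q) := by
    apply IsRelPrime.of_map e.symm
    simpa only [AlgEquiv.symm_apply_apply] using h
  have key : ∀ (P : MvPolynomial (Fin 2) ℝ) (x y : ℝ), pev (e P) (y, x) = pev P (x, y) := by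
    intro P x y
    simp only [pev, e, renameEquiv_apply, eval_rename]
    congr 2
    funext i
    fin_cases i <;> simp
  have := finite_snd (e p) (e q) (by simpa only [ne_eq, EmbeddingLike.map_eq_zero_iff] using hq) hrel
  simpa only [key] using this

theorem pev_dense (q : MvPolynomial (Fin 2) ℝ) (hq : q ≠ 0) : Dense {v | pev q v ≠ 0} := by
  rw [Metric.dense_iff]
  rintro ⟨a, b⟩ ε hε
  by_contra hne
  apply hq
  apply MvPolynomial.funext_set ![Metric.ball a ε, Metric.ball b ε]
  · intro i
    fin_cases i
    · simp only [Real.ball_eq_Ioo]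
      simpa [Real.ball_eq_Ioo] using Set.Ioo_infinite (show a - ε < a + ε by linarith)
    · simpa [Real.ball_eq_Ioo] using Set.Ioo_infinite (show b - ε < b + ε by linarith)
  · intro s hs
    have h0 : s 0 ∈ Metric.ball a ε := hs 0 trivial
    have h1 : s 1 ∈ Metric.ball b ε := hs 1 trivial
    have hmem : (s 0, s 1) ∈ Metric.ball (a, b) ε := by
      rw [← ball_prod_same]; exact ⟨h0, h1⟩
    have hz : pev q (s 0, s 1) = 0 := by
      by_contra hnz
      exact hne ⟨_, hmem, hnz⟩
    have hs' : s = ![s 0, s 1] := by funext i; fin_cases i <;> rfl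
    rw [map_zero, hs']
    exact hz

/-- A continuous nonvanishing function on a preconnected set cannot change sign. -/
theorem sign_aux {S : Set ℝ} (hS : IsPreconnected S) {f : ℝ → ℝ} (hf : Continuous f)
    (hne : ∀ t ∈ S, f t ≠ 0) {a b : ℝ} (ha : a ∈ S) (hb : b ∈ S) (hpos : 0 < f a) : 0 < f b := by
  by_contra hneg
  obtain ⟨t, ht, h0⟩ := hS.intermediate_value hb ha hf.continuousOn ⟨not_lt.mp hneg, hpos.le⟩
  exact hne t ht h0

/-- If `p/q` is bounded on an open connected (nonempty) set `G`, then `q` has constant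
sign on `G`. -/
theorem denominator_constant_sign (G : Set (ℝ × ℝ)) (hGo : IsOpen G) (hGc : IsConnected G)
    (p q : MvPolynomial (Fin 2) ℝ) (hq : q ≠ 0)
    (hcop : ∀ d : MvPolynomial (Fin 2) ℝ, d ∣ p → d ∣ q → IsUnit d) (M : ℝ)
    (hb : ∀ v ∈ G, pev q v ≠ 0 → |pev p v / pev q v| ≤ M) :
    ∀ a ∈ G, ∀ b ∈ G, 0 ≤ pev q a * pev q b := by
  have hrel : IsRelPrime p q := fun d h1 h2 => hcop d h1 h2
  have hpc := pev_continuous p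
  have hqc := pev_continuous q
  have hD := pev_dense q hq
  have hGD : G ⊆ closure (G ∩ {v | pev q v ≠ 0}) := hD.open_subset_closure_inter hGo
  have hzero : ∀ v ∈ G, pev q v = 0 → pev p v = 0 := by
    intro v hv h0
    have hcl : IsClosed {v | |pev p v| ≤ M * |pev q v|} :=
      isClosed_le hpc.abs (continuous_const.mul hqc.abs)
    have hsub : G ∩ {v | pev q v ≠ 0} ⊆ {v | |pev p v| ≤ M * |pev q v|} := by
      rintro w ⟨hw, hw0⟩
      have := hb w hw hw0
      rw [abs_div, div_le_iff₀ (abs_pos.mpr hw0)] at this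
      exact this
    have h1 : |pev p v| ≤ M * |pev q v| := hcl.closure_subset_iff.mpr hsub (hGD hv)
    rw [h0, abs_zero, mul_zero] at h1
    exact abs_eq_zero.mp (le_antisymm h1 (abs_nonneg _))
  have hX := finite_fst p q hq hrel
  have hY := finite_snd p q hq hrel
  -- main claim: both signs cannot occur
  have main : ∀ a ∈ G, ∀ b ∈ G, 0 < pev q a → pev q b < 0 → False := by
    intro a ha b hb' hqa hqb
    have hcover : G ⊆ closure {v | 0 < pev q v} ∪ closure {v | pev q v < 0} := by
      rw [← closure_union]
      refine hGD.trans (closure_mono ?_)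
      rintro w ⟨-, hw⟩
      rcases lt_or_gt_of_ne hw with h | h
      · exact Or.inr h
      · exact Or.inl h
    obtain ⟨z, hzG, hzP, hzN⟩ := isPreconnected_closed_iff.mp hGc.isPreconnected _ _
      isClosed_closure isClosed_closure hcover ⟨a, ha, subset_closure hqa⟩
      ⟨b, hb', subset_closure hqb⟩
    obtain ⟨ε, hε, hball⟩ := Metric.isOpen_iff.mp hGo z hzG
    have hPo : IsOpen {v | 0 < pev q v} := isOpen_lt continuous_const hqc
    have hNo : IsOpen {v | pev q v < 0} := isOpen_lt hqc continuous_const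
    have hP1 : (Metric.ball z ε ∩ {v | 0 < pev q v}).Nonempty :=
      mem_closure_iff.mp hzP _ Metric.isOpen_ball (Metric.mem_ball_self hε)
    have hN1 : (Metric.ball z ε ∩ {v | pev q v < 0}).Nonempty :=
      mem_closure_iff.mp hzN _ Metric.isOpen_ball (Metric.mem_ball_self hε)
    have hYd := (hY.countable.dense_compl ℝ).preimage (isOpenMap_snd (X := ℝ) (Y := ℝ))
    have hXd := (hX.countable.dense_compl ℝ).preimage (isOpenMap_fst (X := ℝ) (Y := ℝ))
    obtain ⟨⟨a1, a2⟩, ⟨haB, haP⟩, haY⟩ :=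
      hYd.inter_open_nonempty _ (Metric.isOpen_ball.inter hPo) hP1
    obtain ⟨⟨b1, b2⟩, ⟨hbB, hbN⟩, hbX⟩ :=
      hXd.inter_open_nonempty _ (Metric.isOpen_ball.inter hNo) hN1
    obtain ⟨z1, z2⟩ := z
    rw [← ball_prod_same] at haB hbB hball
    have hc1 : IsPreconnected (Metric.ball z1 ε) := (convex_ball z1 ε).isPreconnected
    have hc2 : IsPreconnected (Metric.ball z2 ε) := (convex_ball z2 ε).isPreconnected
    have s1 : 0 < pev q (b1, a2) := by
      refine sign_aux hc1 (f := fun t => pev q (t, a2)) (hqc.comp (by fun_prop)) ?_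
        haB.1 hbB.1 haP
      intro t ht h0
      exact haY ⟨t, hzero _ (hball ⟨ht, haB.2⟩) h0, h0⟩
    have s2 : 0 < pev q (b1, b2) := by
      refine sign_aux hc2 (f := fun t => pev q (b1, t)) (hqc.comp (by fun_prop)) ?_
        haB.2 hbB.2 s1
      intro t ht h0
      exact hbX ⟨t, hzero _ (hball ⟨hbB.1, ht⟩) h0, h0⟩
    exact lt_asymm s2 hbN
  intro a ha b hb'
  by_contra hneg
  rw [not_le, mul_neg_iff] at hneg
  rcases hneg with ⟨h1, h2⟩ | ⟨h1, h2⟩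
  · exact main a ha b hb' h1 h2
  · exact main b hb' a ha h2 h1
end

section
/- Let (e_k)_{k≥1} be a strictly increasing sequence of rational numbers with e_1 ≥ 1. Then for every n ∈ ℕ and every s ∈ ℚ, the set of nondecreasing n-tuples (k_1 ≤ k_2 ≤ ⋯ ≤ k_n) of positive integers with e_{k_1} + e_{k_2} + ⋯ + e_{k_n} = s is finite. -/
open Filter Topology

/-- For a strictly increasing sequence of rationals `e` with `e 0 ≥ 1`, for each `n` and
each rational `s`, there are only finitely many nondecreasing `n`-tuples of indices whose
associated exponents sum to `s`. -/
theorem exponent_sum_finite (e : ℕ → ℚ) (he : StrictMono e) (h1 : 1 ≤ e 0) (n : ℕ) (s : ℚ) :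
    {k : Fin n → ℕ | Monotone k ∧ ∑ i, e (k i) = s}.Finite := by
  by_contra hinf
  have hinf' : {k : Fin n → ℕ | Monotone k ∧ ∑ i, e (k i) = s}.Infinite := hinf
  let f := hinf'.natEmbedding
  obtain ⟨g, hg⟩ := (Set.isPWO_of_wellQuasiOrderedLE (Set.univ : Set (Fin n → ℕ))).exists_monotone_subseq
    (f := fun m => (f m : Fin n → ℕ)) (fun _ => Set.mem_univ _)
  have hle : (f (g 0) : Fin n → ℕ) ≤ f (g 1) := hg (Nat.zero_le 1)
  have hne : (f (g 0) : Fin n → ℕ) ≠ f (g 1) := by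
    intro h
    have := g.injective (f.injective (Subtype.ext h))
    omega
  obtain ⟨_, i, hi⟩ := Pi.lt_def.1 (lt_of_le_of_ne hle hne)
  have hlt : ∑ i, e ((f (g 0) : Fin n → ℕ) i) < ∑ i, e ((f (g 1) : Fin n → ℕ) i) :=
    Finset.sum_lt_sum (fun j _ => he.monotone (hle j)) ⟨i, Finset.mem_univ _, he hi⟩
  rw [(f (g 0)).2.2, (f (g 1)).2.2] at hlt
  exact lt_irrefl _ hlt
end

section
/- Let f = p/q be a rational function of two real variables bounded near (x₀,y₀). Let Φ(t) = Σ_{k=1}^N φ_k |t|^{e_k} be a function of type (i) (N ≥ 0) and let e be an irrational real number with e ≥ 1 and, if N ≥ 1, e ≥ e_N. Define the curve y = y₀ + Φ(x−x₀) + |x−x₀|^e. Then both one-sided limits lim_{x→x₀⁺} f(x, y₀+Φ(x−x₀)+|x−x₀|^e) and lim_{x→x₀⁻} f(x, y₀+Φ(x−x₀)+|x−x₀|^e) exist and are finite (the curve eventually avoids the zero set of q on each side). -/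
open MvPolynomial Filter Topology

lemma genpoly_asymp {ι : Type*} (S : Finset ι) (hS : S.Nonempty) (c a : ι → ℝ)
    (ha : Function.Injective a) (hc : ∀ i ∈ S, c i ≠ 0) :
    ∃ α d : ℝ, d ≠ 0 ∧
      Tendsto (fun t : ℝ => (∑ i ∈ S, c i * t ^ (a i)) * t ^ (-α)) (𝓝[>] 0) (𝓝 d) := by
  classical
  obtain ⟨i₀, hi₀, hmin⟩ := S.exists_min_image a hS
  refine ⟨a i₀, c i₀, hc i₀ hi₀, ?_⟩
  have h1 : Tendsto (fun t : ℝ => ∑ i ∈ S, c i * t ^ (a i - a i₀)) (𝓝[>] 0)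
      (𝓝 (∑ i ∈ S, if i = i₀ then c i else 0)) := by
    apply tendsto_finsetSum
    intro i hi
    by_cases h : i = i₀
    · subst h
      simp
    · simp only [h, if_false]
      have hlt : 0 < a i - a i₀ := by
        have := hmin i hi
        have h2 : a i ≠ a i₀ := fun h' => h (ha h')
        have := lt_of_le_of_ne this (Ne.symm h2)
        linarith
      have hcont : ContinuousAt (fun t : ℝ => t ^ (a i - a i₀)) 0 :=
        Real.continuousAt_rpow_const _ _ (Or.inr hlt.le)
      have h3 : Tendsto (fun t : ℝ => t ^ (a i - a i₀)) (𝓝[>] 0) (𝓝 0) := by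
        have := hcont.tendsto
        rw [Real.zero_rpow hlt.ne'] at this
        exact this.mono_left nhdsWithin_le_nhds
      simpa using h3.const_mul (c i)
  rw [Finset.sum_ite_eq' S i₀ c, if_pos hi₀] at h1
  refine h1.congr' ?_
  filter_upwards [self_mem_nhdsWithin] with t ht
  rw [Finset.sum_mul]
  refine Finset.sum_congr rfl fun i _ => ?_
  rw [mul_assoc, ← Real.rpow_add ht, sub_eq_add_neg]

lemma limit_aux (P Q : ℝ → ℝ)
    (hP : P = (fun _ => 0) ∨ ∃ α d : ℝ, d ≠ 0 ∧
      Tendsto (fun t : ℝ => P t * t ^ (-α)) (𝓝[>] 0) (𝓝 d))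
    (hQ : ∃ α d : ℝ, d ≠ 0 ∧ Tendsto (fun t : ℝ => Q t * t ^ (-α)) (𝓝[>] 0) (𝓝 d))
    (M : ℝ) (hM : ∀ᶠ t in 𝓝[>] (0:ℝ), Q t ≠ 0 → |P t / Q t| ≤ M) :
    (∀ᶠ t in 𝓝[>] (0:ℝ), Q t ≠ 0) ∧
      ∃ L : ℝ, Tendsto (fun t => P t / Q t) (𝓝[>] 0) (𝓝 L) := by
  obtain ⟨α, d, hd, hQ⟩ := hQ
  have hne : ∀ᶠ t in 𝓝[>] (0:ℝ), Q t ≠ 0 := by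
    filter_upwards [hQ.eventually_ne hd] with t ht h0
    simp [h0] at ht
  refine ⟨hne, ?_⟩
  rcases hP with rfl | ⟨β, d', hd', hP⟩
  · exact ⟨0, by simp⟩
  have hR := hP.div hQ hd
  have heq : ∀ᶠ t in 𝓝[>] (0:ℝ),
      P t / Q t = (P t * t ^ (-β)) / (Q t * t ^ (-α)) * t ^ (β - α) := by
    filter_upwards [hne, self_mem_nhdsWithin] with t ht ht0
    have ht0 : 0 < t := ht0
    have h1 : t ^ (β - α) = t ^ (-α) * (t ^ (-β))⁻¹ := by
      rw [← Real.rpow_neg ht0.le, ← Real.rpow_add ht0]; congr 1; ring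
    have h2 := (Real.rpow_pos_of_pos ht0 (-α)).ne'
    have h3 := (Real.rpow_pos_of_pos ht0 (-β)).ne'
    rw [h1]; field_simp
  by_cases h : 0 ≤ β - α
  · refine ⟨d' / d * (0:ℝ) ^ (β - α), ?_⟩
    have hcont : Tendsto (fun t : ℝ => t ^ (β - α)) (𝓝[>] 0) (𝓝 ((0:ℝ) ^ (β - α))) :=
      (Real.continuousAt_rpow_const _ _ (Or.inr h)).tendsto.mono_left nhdsWithin_le_nhds
    exact (hR.mul hcont).congr' (heq.mono fun t ht => ht.symm)
  · exfalso
    push Not at h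
    have hinf : Tendsto (fun t : ℝ => t ^ (β - α)) (𝓝[>] 0) atTop :=
      tendsto_rpow_neg_nhdsGT_zero h
    have hpos : 0 < |d' / d| := abs_pos.mpr (div_ne_zero hd' hd)
    have := hR.abs.pos_mul_atTop hpos hinf
    have h4 := this.eventually_gt_atTop M
    obtain ⟨t, h5, h6, h7, h8, h9⟩ := (h4.and (hM.and (hne.and (heq.and
      self_mem_nhdsWithin)))).exists
    have h9 : 0 < t := h9
    have h10 := h6 h7
    rw [h8, abs_mul, abs_of_pos (Real.rpow_pos_of_pos h9 (β - α))] at h10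
    exact absurd h10 (not_le.mpr h5)

lemma expo_inj (e : ℝ) (hirr : Irrational e) (n : ℕ) (hn : 0 < n) :
    Function.Injective (fun m : Fin 2 →₀ ℕ => (m 0 : ℝ) / n + (m 1 : ℝ) * e) := by
  intro m m' h
  simp only at h
  have hn' : (n:ℝ) ≠ 0 := by positivity
  have h1 : m 1 = m' 1 := by
    by_contra hne
    have hne' : ((m 1 : ℝ) - m' 1) ≠ 0 := by
      rw [sub_ne_zero]; exact_mod_cast hne
    apply hirr
    refine ⟨(((m' 0 : ℚ) - m 0) / n) / ((m 1 : ℚ) - m' 1), ?_⟩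
    push_cast
    rw [div_eq_iff hne', sub_div]
    linarith
  have h0 : m 0 = m' 0 := by
    rw [h1] at h
    have : (m 0 : ℝ) / n = m' 0 / n := by linarith
    rw [div_left_inj' hn'] at this
    exact_mod_cast this
  ext i
  fin_cases i
  · exact h0
  · exact h1

/-- The substitution polynomials. -/
noncomputable def substPoly (x₀ y₀ s : ℝ) (n N : ℕ) (φ : Fin N → ℝ) (m : Fin N → ℕ) :
    Fin 2 → MvPolynomial (Fin 2) ℝ :=
  ![C x₀ + C s * X 0 ^ n, C y₀ + (∑ k, C (φ k) * X 0 ^ m k) + X 1]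

lemma eval_subst (x₀ y₀ s : ℝ) (n N : ℕ) (φ : Fin N → ℝ) (m : Fin N → ℕ)
    (r : MvPolynomial (Fin 2) ℝ) (u w : ℝ) :
    eval ![u, w] (bind₁ (substPoly x₀ y₀ s n N φ m) r) =
      pev r (x₀ + s * u ^ n, y₀ + (∑ k, φ k * u ^ m k) + w) := by
  unfold pev
  rw [← MvPolynomial.coe_aeval_eq_eval, ← MvPolynomial.coe_aeval_eq_eval]
  simp only [RingHom.coe_coe]
  rw [aeval_bind₁]
  congr 2
  funext i
  fin_cases i <;> simp [substPoly]

lemma subst_ne_zero (x₀ y₀ s : ℝ) (hs : s ≠ 0) (n N : ℕ) (hn : 0 < n) (φ : Fin N → ℝ)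
    (m : Fin N → ℕ) (r : MvPolynomial (Fin 2) ℝ) (hr : r ≠ 0) :
    bind₁ (substPoly x₀ y₀ s n N φ m) r ≠ 0 := by
  intro h0
  apply hr
  refine MvPolynomial.funext_set
    (s := ![(fun t : ℝ => x₀ + s * t) '' Set.Ioi 0, Set.univ]) ?_ ?_
  · intro i
    fin_cases i
    · refine (Set.Ioi_infinite (0:ℝ)).image ?_
      intro a _ b _ hab
      simpa [hs] using hab
    · exact Set.infinite_univ
  · intro v hv
    have hv0 := hv 0 (Set.mem_univ _)
    obtain ⟨t, ht, htv⟩ : v 0 ∈ (fun t : ℝ => x₀ + s * t) '' Set.Ioi 0 := hv0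
    have ht : 0 < t := ht
    have h := eval_subst x₀ y₀ s n N φ m r (t ^ ((n:ℝ)⁻¹))
      (v 1 - (y₀ + (∑ k, φ k * (t ^ ((n:ℝ)⁻¹)) ^ m k)))
    rw [h0, Real.rpow_inv_natCast_pow ht.le hn.ne'] at h
    simp only [map_zero, add_sub_cancel] at h
    simp only at htv
    rw [htv] at h
    unfold pev at h
    simp only [map_zero]
    rw [h]
    congr 2
    funext i
    fin_cases i <;> rfl

lemma exists_common_denom (N : ℕ) (ee : Fin N → ℚ) (h1 : ∀ k, 1 ≤ ee k) :
    ∃ n : ℕ, 0 < n ∧ ∃ m : Fin N → ℕ, ∀ k, (ee k : ℝ) = (m k : ℝ) / n := by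
  refine ⟨∏ k, (ee k).den, Finset.prod_pos fun k _ => (ee k).den_pos, ?_⟩
  refine ⟨fun k => (ee k).num.toNat * ∏ j ∈ Finset.univ.erase k, (ee j).den, fun k => ?_⟩
  have hnum : (((ee k).num.toNat : ℤ)) = (ee k).num :=
    Int.toNat_of_nonneg (Rat.num_nonneg.mpr (by linarith [h1 k]))
  have hnum' : (((ee k).num.toNat : ℝ)) = ((ee k).num : ℝ) := by exact_mod_cast hnum
  rw [← Finset.mul_prod_erase Finset.univ (fun k => (ee k).den) (Finset.mem_univ k)]
  have hp : ((∏ j ∈ Finset.univ.erase k, (ee j).den : ℕ) : ℝ) ≠ 0 := by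
    have : 0 < ∏ j ∈ Finset.univ.erase k, (ee j).den :=
      Finset.prod_pos fun k _ => (ee k).den_pos
    exact_mod_cast this.ne'
  rw [Nat.cast_mul, Nat.cast_mul, mul_div_mul_right _ _ hp, hnum']
  exact Rat.cast_def (ee k)

lemma side_limit (p q : MvPolynomial (Fin 2) ℝ) (hq : q ≠ 0) (x₀ y₀ : ℝ)
    (hb : BoundedNear p q (x₀, y₀))
    (N : ℕ) (φ : Fin N → ℝ) (ee : Fin N → ℚ) (h1 : ∀ k, 1 ≤ ee k)
    (e : ℝ) (hirr : Irrational e) (he1 : 1 ≤ e) (s : ℝ) (hs : s ≠ 0) :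
    let G : ℝ → ℝ := fun t => y₀ + (∑ k, φ k * t ^ ((ee k : ℝ))) + t ^ e
    (∀ᶠ t in 𝓝[>] (0:ℝ), pev q (x₀ + s * t, G t) ≠ 0) ∧
    (∃ L : ℝ, Tendsto (fun t => pev p (x₀ + s * t, G t) / pev q (x₀ + s * t, G t))
      (𝓝[>] 0) (𝓝 L)) := by
  intro G
  obtain ⟨n, hn, m, hm⟩ := exists_common_denom N ee h1
  have key : ∀ r : MvPolynomial (Fin 2) ℝ, ∀ t : ℝ, 0 < t →
      pev r (x₀ + s * t, G t) =
        ∑ i ∈ (bind₁ (substPoly x₀ y₀ s n N φ m) r).support,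
          coeff i (bind₁ (substPoly x₀ y₀ s n N φ m) r) * t ^ ((i 0 : ℝ) / n + (i 1 : ℝ) * e) := by
    intro r t ht
    have h := eval_subst x₀ y₀ s n N φ m r (t ^ ((n:ℝ)⁻¹)) (t ^ e)
    rw [Real.rpow_inv_natCast_pow ht.le hn.ne'] at h
    have hG : G t = y₀ + (∑ k, φ k * (t ^ ((n:ℝ)⁻¹)) ^ m k) + t ^ e := by
      simp only [G]
      congr 2
      refine Finset.sum_congr rfl fun k _ => ?_
      rw [hm k, ← Real.rpow_mul_natCast ht.le]
      congr 2
      rw [div_eq_inv_mul]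
    rw [hG, ← h, MvPolynomial.eval_eq']
    refine Finset.sum_congr rfl fun i _ => ?_
    congr 1
    simp only [Fin.prod_univ_two, Matrix.cons_val_zero, Matrix.cons_val_one]
    rw [← Real.rpow_mul_natCast ht.le, ← Real.rpow_mul_natCast ht.le, ← Real.rpow_add ht]
    congr 1
    ring
  have asym : ∀ r : MvPolynomial (Fin 2) ℝ, r ≠ 0 → ∃ α d : ℝ, d ≠ 0 ∧
      Tendsto (fun t : ℝ => pev r (x₀ + s * t, G t) * t ^ (-α)) (𝓝[>] 0) (𝓝 d) := by
    intro r hr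
    have hne := subst_ne_zero x₀ y₀ s hs n N hn φ m r hr
    obtain ⟨α, d, hd, hlim⟩ := genpoly_asymp
      (bind₁ (substPoly x₀ y₀ s n N φ m) r).support (by
        rw [Finset.nonempty_iff_ne_empty]; simpa using hne)
      (fun i => coeff i (bind₁ (substPoly x₀ y₀ s n N φ m) r)) _
      (expo_inj e hirr n hn) (fun i hi => by simpa using hi)
    refine ⟨α, d, hd, hlim.congr' ?_⟩
    filter_upwards [self_mem_nhdsWithin] with t ht
    rw [key r t ht]
  obtain ⟨U, hU, M, hM⟩ := hb
  have hcurve : Tendsto (fun t : ℝ => (x₀ + s * t, G t)) (𝓝[>] 0) (𝓝 (x₀, y₀)) := by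
    have hc : ContinuousAt (fun t : ℝ => (x₀ + s * t, G t)) 0 := by
      refine ContinuousAt.prodMk (by fun_prop) ?_
      refine ContinuousAt.add (ContinuousAt.add continuousAt_const ?_)
        (Real.continuousAt_rpow_const _ _ (Or.inr (by linarith)))
      refine tendsto_finsetSum _ fun k _ => ?_
      refine ContinuousAt.mul continuousAt_const
        (Real.continuousAt_rpow_const _ _ (Or.inr ?_))
      have := h1 k
      have : (0:ℚ) ≤ ee k := by linarith
      exact_mod_cast this
    have h0 : (x₀ + s * 0, G 0) = (x₀, y₀) := by
      have hz : ∀ k, (0:ℝ) ^ ((ee k : ℝ)) = 0 := fun k => by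
        apply Real.zero_rpow
        have := h1 k
        have : ee k ≠ 0 := by linarith
        exact_mod_cast this
      have : (0:ℝ) ^ e = 0 := Real.zero_rpow (by linarith)
      simp [G, hz, this]
    have := hc.tendsto
    rw [h0] at this
    exact this.mono_left nhdsWithin_le_nhds
  refine limit_aux (fun t => pev p (x₀ + s * t, G t)) (fun t => pev q (x₀ + s * t, G t))
    ?_ (asym q hq) M ?_
  · by_cases hp : p = 0
    · left; funext t; simp [hp, pev]
    · right; exact asym p hp
  · filter_upwards [hcurve hU] with t ht
    exact hM _ ht

/-- Along the curve `y = y₀ + Φ(x-x₀) + |x-x₀|^e` with `Φ` of type (i) and `e` irrational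
(`e ≥ 1`, `e ≥ e_N`), the denominator is eventually nonzero on each side and the one-sided
limits of a rational function bounded near `(x₀,y₀)` exist and are finite. -/
theorem irrational_exponent_curve_limits (p q : MvPolynomial (Fin 2) ℝ) (hq : q ≠ 0)
    (hcop : ∀ d : MvPolynomial (Fin 2) ℝ, d ∣ p → d ∣ q → IsUnit d) (x₀ y₀ : ℝ)
    (hb : BoundedNear p q (x₀, y₀))
    (N : ℕ) (φ : Fin N → ℝ) (ee : Fin N → ℚ)
    (hφ : ∀ k, φ k ≠ 0) (hee : StrictMono ee) (h1 : ∀ k, 1 ≤ ee k)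
    (e : ℝ) (hirr : Irrational e) (he1 : 1 ≤ e) (heN : ∀ k, (ee k : ℝ) ≤ e) :
    let g : ℝ → ℝ := fun x =>
      y₀ + (∑ k, φ k * |x - x₀| ^ ((ee k : ℝ))) + |x - x₀| ^ e
    (∀ᶠ x in 𝓝[>] x₀, pev q (x, g x) ≠ 0) ∧
    (∀ᶠ x in 𝓝[<] x₀, pev q (x, g x) ≠ 0) ∧
    (∃ L : ℝ, Tendsto (fun x => pev p (x, g x) / pev q (x, g x)) (𝓝[>] x₀) (𝓝 L)) ∧
    (∃ L : ℝ, Tendsto (fun x => pev p (x, g x) / pev q (x, g x)) (𝓝[<] x₀) (𝓝 L)) := by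
  intro g
  have hR := side_limit p q hq x₀ y₀ hb N φ ee h1 e hirr he1 1 one_ne_zero
  have hL := side_limit p q hq x₀ y₀ hb N φ ee h1 e hirr he1 (-1) (by norm_num)
  obtain ⟨hR1, LR, hR2⟩ := hR
  obtain ⟨hL1, LL, hL2⟩ := hL
  have hcont : Tendsto (fun x : ℝ => |x - x₀|) (𝓝 x₀) (𝓝 0) := by
    have : ContinuousAt (fun x : ℝ => |x - x₀|) x₀ := by fun_prop
    simpa using this.tendsto
  have tR : Tendsto (fun x : ℝ => |x - x₀|) (𝓝[>] x₀) (𝓝[>] 0) := by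
    refine tendsto_nhdsWithin_iff.mpr ⟨hcont.mono_left nhdsWithin_le_nhds, ?_⟩
    filter_upwards [self_mem_nhdsWithin] with x hx
    exact abs_pos.mpr (sub_ne_zero.mpr (Set.mem_Ioi.mp hx).ne')
  have tL : Tendsto (fun x : ℝ => |x - x₀|) (𝓝[<] x₀) (𝓝[>] 0) := by
    refine tendsto_nhdsWithin_iff.mpr ⟨hcont.mono_left nhdsWithin_le_nhds, ?_⟩
    filter_upwards [self_mem_nhdsWithin] with x hx
    exact abs_pos.mpr (sub_ne_zero.mpr (Set.mem_Iio.mp hx).ne)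
  have eR : ∀ᶠ x in 𝓝[>] x₀, x₀ + 1 * |x - x₀| = x := by
    filter_upwards [self_mem_nhdsWithin] with x hx
    have hx : x₀ < x := hx
    rw [abs_of_pos (by linarith)]; ring
  have eL : ∀ᶠ x in 𝓝[<] x₀, x₀ + (-1) * |x - x₀| = x := by
    filter_upwards [self_mem_nhdsWithin] with x hx
    have hx : x < x₀ := hx
    rw [abs_of_neg (by linarith)]; ring
  refine ⟨?_, ?_, ⟨LR, ?_⟩, ⟨LL, ?_⟩⟩
  · filter_upwards [tR.eventually hR1, eR] with x h h'
    rw [h'] at h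
    exact h
  · filter_upwards [tL.eventually hL1, eL] with x h h'
    rw [h'] at h
    exact h
  · refine (hR2.comp tR).congr' ?_
    filter_upwards [eR] with x h'
    simp only [Function.comp_apply]
    rw [h']
  · refine (hL2.comp tL).congr' ?_
    filter_upwards [eL] with x h'
    simp only [Function.comp_apply]
    rw [h']
end

section
/- Let f = p/q be a rational function of two real variables bounded near (x₀,y₀). Let Φ(t) = Σ_{k=1}^N φ_k |t|^{e_k} be a function of type (i) (N ≥ 0) and let e be a rational number with e ≥ 1 and, if N ≥ 1, e ≥ e_N. Define g(x) = y₀ + Φ(x−x₀) + |x−x₀|^e / ln|x−x₀| for x ≠ x₀. Then both one-sided limits lim_{x→x₀⁺} f(x, g(x)) and lim_{x→x₀⁻} f(x, g(x)) exist and are finite (the curve eventually avoids the zero set of q on each side). -/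
open MvPolynomial Filter Topology

namespace LQ
open Polynomial

/-- Evaluation of a polynomial in `z` (inner) and `u` (outer) as a ring homomorphism. -/
noncomputable def ev (u z : ℝ) : ℝ[X][X] →+* ℝ :=
  (Polynomial.evalRingHom z).comp (Polynomial.evalRingHom (Polynomial.C u))

lemma ev_X (u z : ℝ) : ev u z (Polynomial.X : ℝ[X][X]) = u := by simp [ev]

lemma ev_C (u z : ℝ) (r : ℝ[X]) : ev u z (Polynomial.C r) = r.eval z := by simp [ev]

lemma factor {K : Type*} [CommRing K] [IsDomain K] [WfDvdMonoid K[X]] (R : K[X]) (hR : R ≠ 0) :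
    ∃ (n : ℕ) (r : K) (S : K[X]), r ≠ 0 ∧
      R = Polynomial.X ^ n * (Polynomial.X * S + Polynomial.C r) := by
  obtain ⟨n, a, ha, h⟩ := WfDvdMonoid.max_power_factor hR (Polynomial.irreducible_X (R := K))
  refine ⟨n, a.coeff 0, a.divX, ?_, ?_⟩
  · rwa [Polynomial.X_dvd_iff] at ha
  · rw [Polynomial.X_mul_divX_add, h]

lemma ev_tendsto {l : Filter ℝ} {u z : ℝ → ℝ} (hu : Tendsto u l (𝓝 0)) (hz : Tendsto z l (𝓝 0))
    (R : ℝ[X][X]) : ∃ c, Tendsto (fun x => ev (u x) (z x) R) l (𝓝 c) := by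
  induction R using Polynomial.induction_on' with
  | add p q hp hq =>
    obtain ⟨c, hc⟩ := hp
    obtain ⟨d, hd⟩ := hq
    exact ⟨c + d, by simpa only [map_add] using hc.add hd⟩
  | monomial n r =>
    refine ⟨r.eval 0 * 0 ^ n, ?_⟩
    have : Tendsto (fun x => r.eval (z x)) l (𝓝 (r.eval 0)) :=
      (r.continuous.tendsto 0).comp hz
    simpa only [← Polynomial.C_mul_X_pow_eq_monomial, map_mul, map_pow, ev_X, ev_C]
      using this.mul (hu.pow n)

lemma asymp {l : Filter ℝ} {u z : ℝ → ℝ} (hu0 : ∀ᶠ x in l, u x ≠ 0) (hz0 : ∀ᶠ x in l, z x ≠ 0)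
    (hz : Tendsto z l (𝓝 0)) (huz : ∀ k : ℕ, Tendsto (fun x => u x / z x ^ k) l (𝓝 0))
    (R : ℝ[X][X]) (hR : R ≠ 0) :
    ∃ (a b : ℕ) (c : ℝ), c ≠ 0 ∧
      Tendsto (fun x => ev (u x) (z x) R / (u x ^ a * z x ^ b)) l (𝓝 c) := by
  have hu : Tendsto u l (𝓝 0) := by simpa using huz 0
  obtain ⟨a, r, S, hr, rfl⟩ := factor R hR
  obtain ⟨b, c, s, hc, rfl⟩ := factor r hr
  refine ⟨a, b, c, hc, ?_⟩
  obtain ⟨d, hd⟩ := ev_tendsto hu hz S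
  have hs : Tendsto (fun x => s.eval (z x)) l (𝓝 (s.eval 0)) :=
    (s.continuous.tendsto 0).comp hz
  have := ((huz b).mul hd).add ((hz.mul hs).add_const c)
  simp only [zero_mul, zero_add] at this
  refine this.congr' ?_
  filter_upwards [hu0, hz0] with x h1 h2
  simp only [map_mul, map_add, map_pow, ev_X, ev_C, Polynomial.eval_mul, Polynomial.eval_pow,
    Polynomial.eval_X, Polynomial.eval_add, Polynomial.eval_C]
  field_simp

lemma mono_aux {l : Filter ℝ} {u z : ℝ → ℝ} (hu0 : ∀ᶠ x in l, u x ≠ 0)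
    (hz0 : ∀ᶠ x in l, z x ≠ 0)
    (hz : Tendsto z l (𝓝 0)) (huz : ∀ k : ℕ, Tendsto (fun x => u x / z x ^ k) l (𝓝 0))
    (a b a' b' : ℕ) (h : a < a' ∨ a = a' ∧ b < b') :
    Tendsto (fun x => (u x ^ a' * z x ^ b') / (u x ^ a * z x ^ b)) l (𝓝 0) := by
  have hu : Tendsto u l (𝓝 0) := by simpa using huz 0
  rcases h with h | ⟨rfl, h⟩
  · obtain ⟨k, rfl⟩ := Nat.exists_eq_add_of_lt h
    have := ((hu.pow k).mul (hz.pow b')).mul (huz b)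
    rw [mul_zero] at this
    refine this.congr' ?_
    filter_upwards [hu0, hz0] with x h1 h2
    field_simp
    ring
  · obtain ⟨k, rfl⟩ := Nat.exists_eq_add_of_lt h
    have := (hz.pow k).mul hz
    rw [mul_zero] at this
    refine this.congr' ?_
    filter_upwards [hu0, hz0] with x h1 h2
    field_simp
    ring

lemma limit_exists {l : Filter ℝ} [l.NeBot] {u z : ℝ → ℝ} (hu0 : ∀ᶠ x in l, u x ≠ 0)
    (hz0 : ∀ᶠ x in l, z x ≠ 0)
    (hz : Tendsto z l (𝓝 0)) (huz : ∀ k : ℕ, Tendsto (fun x => u x / z x ^ k) l (𝓝 0))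
    (P Q : ℝ[X][X]) (hQ : Q ≠ 0) :
    (∀ᶠ x in l, ev (u x) (z x) Q ≠ 0) ∧
    ((∃ M : ℝ, ∀ᶠ x in l, |ev (u x) (z x) P / ev (u x) (z x) Q| ≤ M) →
      ∃ L, Tendsto (fun x => ev (u x) (z x) P / ev (u x) (z x) Q) l (𝓝 L)) := by
  obtain ⟨a, b, c, hc, hQl⟩ := asymp hu0 hz0 hz huz Q hQ
  have hQ0 : ∀ᶠ x in l, ev (u x) (z x) Q ≠ 0 := by
    filter_upwards [hQl.eventually_ne hc] with x hx h0
    simp [h0] at hx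
  refine ⟨hQ0, ?_⟩
  rintro ⟨M, hM⟩
  by_cases hP : P = 0
  · subst hP
    exact ⟨0, by simp⟩
  obtain ⟨a', b', c', hc', hPl⟩ := asymp hu0 hz0 hz huz P hP
  have hr := hPl.div hQl hc
  have pos : ∀ m, Tendsto (fun x => (u x ^ a' * z x ^ b') / (u x ^ a * z x ^ b)) l (𝓝 m) →
      ∃ L, Tendsto (fun x => ev (u x) (z x) P / ev (u x) (z x) Q) l (𝓝 L) := by
    intro m hm
    refine ⟨_, (hr.mul hm).congr' ?_⟩
    filter_upwards [hu0, hz0, hQ0] with x h1 h2 h3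
    simp only [Pi.div_apply]
    field_simp
  by_cases h : a < a' ∨ a = a' ∧ b < b'
  · exact pos 0 (mono_aux hu0 hz0 hz huz a b a' b' h)
  by_cases h' : a' < a ∨ a' = a ∧ b' < b
  · exfalso
    have hm := mono_aux hu0 hz0 hz huz a' b' a b h'
    have h0 : Tendsto (fun x => ((u x ^ a * z x ^ b) / (u x ^ a' * z x ^ b')) *
        (ev (u x) (z x) P / ev (u x) (z x) Q)) l (𝓝 0) := by
      apply hm.zero_mul_isBoundedUnder_le
      exact ⟨M, by simpa [Filter.eventually_map] using hM⟩
    have h1 := tendsto_nhds_unique (h0.congr' ?_) hr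
    · exact div_ne_zero hc' hc h1.symm
    · filter_upwards [hu0, hz0, hQ0] with x h1 h2 h3
      simp only [Pi.div_apply]
      field_simp
  · have ha : a = a' := by omega
    have hb : b = b' := by omega
    subst ha hb
    refine pos 1 (tendsto_const_nhds.congr' ?_)
    filter_upwards [hu0, hz0] with x h1 h2
    field_simp

/-- Substitution homomorphism. -/
noncomputable def sub (A B : ℝ[X][X]) : MvPolynomial (Fin 2) ℝ →+* ℝ[X][X] :=
  MvPolynomial.eval₂Hom ((Polynomial.C).comp (Polynomial.C : ℝ →+* ℝ[X])) ![A, B]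

lemma ev_sub (A B : ℝ[X][X]) (u z : ℝ) (p : MvPolynomial (Fin 2) ℝ) :
    ev u z (sub A B p) = pev p (ev u z A, ev u z B) := by
  unfold pev
  have : (ev u z).comp (sub A B) = MvPolynomial.eval ![ev u z A, ev u z B] := by
    apply MvPolynomial.ringHom_ext
    · intro r; simp [sub, ev]
    · intro i; fin_cases i <;> simp [sub]
  exact congrArg (fun f => f p) this

lemma common_den {N : ℕ} (ee : Fin N → ℚ) (h1 : ∀ k, 1 ≤ ee k) (e : ℚ) (he1 : 1 ≤ e) :
    ∃ (d : ℕ) (n : Fin N → ℕ) (m : ℕ), 0 < d ∧ (∀ k, (ee k : ℝ) = (1 / d : ℝ) * n k) ∧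
      (e : ℝ) = (1 / d : ℝ) * m ∧ (∀ k, 0 < n k) ∧ 0 < m := by
  have key : ∀ (d : ℕ), 0 < d → ∀ r : ℚ, 1 ≤ r → r.den ∣ d →
      ∃ n : ℕ, (r : ℝ) = (1 / d : ℝ) * n ∧ 0 < n := by
    rintro d hd r hr ⟨c, rfl⟩
    have hn : 0 < r.num := Rat.num_pos.2 (by linarith)
    have hc : 0 < c := Nat.pos_of_mul_pos_left hd
    refine ⟨r.num.toNat * c, ?_, Nat.mul_pos (by omega) hc⟩
    have h3 : ((r.num.toNat : ℤ) : ℝ) = r.num := by rw [Int.toNat_of_nonneg hn.le]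
    have h4 : (r : ℝ) = r.num / r.den := by exact_mod_cast (Rat.num_div_den r).symm
    have h5 : (r.den : ℝ) ≠ 0 := by exact_mod_cast r.den_ne_zero
    have h6 : (c : ℝ) ≠ 0 := by exact_mod_cast hc.ne'
    rw [h4, ← h3]
    push_cast
    field_simp
  set d := e.den * ∏ k, (ee k).den with hd
  have hd0 : 0 < d := Nat.mul_pos e.den_pos (Finset.prod_pos fun k _ => (ee k).den_pos)
  obtain ⟨m, hm, hm0⟩ := key d hd0 e he1 (Dvd.intro _ rfl)
  choose n hn hn0 using fun k => key d hd0 (ee k) (h1 k)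
    ((Finset.dvd_prod_of_mem (fun k => (ee k).den) (Finset.mem_univ k)).mul_left _)
  exact ⟨d, n, m, hd0, hn, hm, hn0, hm0⟩

lemma rpow_log (r : ℝ) (hr : 0 < r) (k : ℕ) :
    Tendsto (fun t : ℝ => t ^ r / (1 / Real.log t) ^ k) (𝓝[>] 0) (𝓝 0) := by
  have h := (isLittleO_abs_log_rpow_rpow_nhdsGT_zero k (neg_lt_zero.2 hr)).tendsto_div_nhds_zero
  rw [tendsto_zero_iff_abs_tendsto_zero]
  refine h.congr' ?_
  filter_upwards [self_mem_nhdsWithin] with t ht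
  have ht : 0 < t := ht
  rw [Real.rpow_neg ht.le, Real.rpow_natCast]
  simp [abs_mul, abs_div, abs_of_pos (Real.rpow_pos_of_pos ht r), mul_comm]

lemma side (p q : MvPolynomial (Fin 2) ℝ) (hq : q ≠ 0) (x₀ y₀ : ℝ)
    (hb : BoundedNear p q (x₀, y₀))
    (N : ℕ) (φ : Fin N → ℝ) (ee : Fin N → ℚ) (h1 : ∀ k, 1 ≤ ee k)
    (e : ℚ) (he1 : 1 ≤ e) (g : ℝ → ℝ)
    (hg : g = fun x =>
      y₀ + (∑ k, φ k * |x - x₀| ^ ((ee k : ℝ))) + |x - x₀| ^ ((e : ℝ)) / Real.log |x - x₀|)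
    (l : Filter ℝ) [l.NeBot] (s : ℝ) (hs : s ≠ 0)
    (ht : Tendsto (fun x => |x - x₀|) l (𝓝[>] 0)) (hx : ∀ᶠ x in l, x = x₀ + s * |x - x₀|) :
    (∀ᶠ x in l, pev q (x, g x) ≠ 0) ∧
    (∃ L : ℝ, Tendsto (fun x => pev p (x, g x) / pev q (x, g x)) l (𝓝 L)) := by
  obtain ⟨d, n, m, hd, hn, hm, hn0, hm0⟩ := common_den ee h1 e he1
  have hd' : (d : ℝ) ≠ 0 := by exact_mod_cast hd.ne'
  have hdp : (0 : ℝ) < 1 / d := by positivity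
  set u : ℝ → ℝ := fun x => |x - x₀| ^ (1 / d : ℝ) with hu
  set z : ℝ → ℝ := fun x => 1 / Real.log |x - x₀| with hz
  let cc : ℝ → ℝ[X][X] := fun r => Polynomial.C (Polynomial.C r)
  let A : ℝ[X][X] := cc x₀ + cc s * Polynomial.X ^ d
  let B : ℝ[X][X] := cc y₀ + (∑ k, cc (φ k) * Polynomial.X ^ (n k)) +
    Polynomial.X ^ m * Polynomial.C Polynomial.X
  have hA : ∀ u z, ev u z A = x₀ + s * u ^ d := by
    intro u z; simp [A, cc, ev_X, ev_C]
  have hB : ∀ u z, ev u z B = y₀ + (∑ k, φ k * u ^ (n k)) + u ^ m * z := by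
    intro u z; simp [B, cc, ev_X, ev_C]; ring
  have htpos : ∀ᶠ x in l, 0 < |x - x₀| := ht.eventually self_mem_nhdsWithin
  have hcurve : ∀ᶠ x in l, ∀ P, ev (u x) (z x) (sub A B P) = pev P (x, g x) := by
    filter_upwards [htpos, hx] with x hx0 hx P
    have hpow : ∀ k : ℕ, u x ^ k = |x - x₀| ^ ((1 / d : ℝ) * k) := by
      intro k
      rw [Real.rpow_mul hx0.le, Real.rpow_natCast]
    rw [ev_sub, hA, hB]
    congr 2
    · rw [hpow, one_div_mul_cancel hd', Real.rpow_one, ← hx]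
    · rw [hg]
      simp only [hpow, hn, hm, hz]
      ring
  have hzl : Tendsto z l (𝓝 0) := by
    have := (Real.tendsto_log_nhdsGT_zero.comp ht).inv_tendsto_atBot
    refine this.congr fun x => ?_
    simp [hz]
  have hz0 : ∀ᶠ x in l, z x ≠ 0 := by
    have := (Real.tendsto_log_nhdsGT_zero.comp ht).eventually (eventually_lt_atBot 0)
    filter_upwards [this] with x hx
    exact one_div_ne_zero (ne_of_lt hx)
  have hu0 : ∀ᶠ x in l, u x ≠ 0 := by
    filter_upwards [htpos] with x hx
    exact (Real.rpow_pos_of_pos hx _).ne'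
  have huz : ∀ k : ℕ, Tendsto (fun x => u x / z x ^ k) l (𝓝 0) := fun k =>
    (rpow_log _ hdp k).comp ht
  have hul : Tendsto u l (𝓝 0) := by simpa using huz 0
  have hQ : sub A B q ≠ 0 := by
    intro h0
    apply hq
    have hinf : ∀ i : Fin 2, (![{x : ℝ | 0 < (x - x₀) / s}, Set.univ] i).Infinite := by
      intro i
      fin_cases i
      · have : Set.InjOn (fun t : ℝ => x₀ + s * t) (Set.Ioi 0) := by
          intro a _ b _ hab
          simpa [hs] using hab
        refine ((Set.infinite_image_iff this).2 (Set.Ioi_infinite 0)).mono ?_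
        rintro _ ⟨t, ht, rfl⟩
        simpa [hs] using ht
      · exact Set.infinite_univ
    apply MvPolynomial.funext_set _ hinf
    intro v hv
    have hv0 : 0 < (v 0 - x₀) / s := hv 0 trivial
    set w := ((v 0 - x₀) / s) ^ (1 / d : ℝ) with hw
    have hwp : 0 < w := Real.rpow_pos_of_pos hv0 _
    have hwd : w ^ d = (v 0 - x₀) / s := by
      rw [← Real.rpow_natCast, ← Real.rpow_mul hv0.le, one_div_mul_cancel hd', Real.rpow_one]
    have := ev_sub A B w ((v 1 - y₀ - ∑ k, φ k * w ^ (n k)) / w ^ m) q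
    rw [h0, map_zero, hA, hB, hwd] at this
    rw [map_zero, this, pev]
    congr 2
    ext i
    fin_cases i
    · simp; field_simp; ring
    · simp; field_simp; ring
  obtain ⟨hne, hlim⟩ := limit_exists hu0 hz0 hzl huz (sub A B p) (sub A B q) hQ
  have hne' : ∀ᶠ x in l, pev q (x, g x) ≠ 0 := by
    filter_upwards [hne, hcurve] with x h1 h2
    rwa [h2] at h1
  refine ⟨hne', ?_⟩
  obtain ⟨U, hU, M, hM⟩ := hb
  have hct : Tendsto (fun x => (x, g x)) l (𝓝 (x₀, y₀)) := by
    have h1 : Tendsto (fun x => (x₀ + s * u x ^ d,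
        y₀ + (∑ k, φ k * u x ^ (n k)) + u x ^ m * z x)) l
        (𝓝 (x₀ + s * 0 ^ d, y₀ + (∑ k, φ k * 0 ^ (n k)) + 0 ^ m * 0)) := by
      refine Tendsto.prodMk_nhds (((hul.pow d).const_mul s).const_add x₀) ?_
      exact ((tendsto_finsetSum _ fun k _ => (hul.pow (n k)).const_mul (φ k)).const_add y₀).add
        ((hul.pow m).mul hzl)
    have h2 : (x₀ + s * 0 ^ d, y₀ + (∑ k, φ k * 0 ^ (n k)) + 0 ^ m * 0) = (x₀, y₀) := by
      simp [hd.ne', fun k => (hn0 k).ne']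
    rw [h2] at h1
    refine h1.congr' ?_
    filter_upwards [hcurve] with x hc
    have e0 := hc (MvPolynomial.X 0)
    have e1 := hc (MvPolynomial.X 1)
    rw [ev_sub, hA, hB] at e0 e1
    simp [pev] at e0 e1
    rw [Prod.mk.injEq]
    exact ⟨e0, e1⟩
  obtain ⟨L, hL⟩ := hlim ⟨M, by
    filter_upwards [hct.eventually hU, hne', hcurve] with x h1 h2 h3
    rw [h3, h3]
    exact hM _ h1 h2⟩
  refine ⟨L, hL.congr' ?_⟩
  filter_upwards [hcurve] with x h
  rw [h, h]

end LQ

/-- Along the curve `y = y₀ + Φ(x-x₀) + |x-x₀|^e / ln|x-x₀|` with `Φ` of type (i) and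
`e` rational (`e ≥ 1`, `e ≥ e_N`), the denominator is eventually nonzero on each side and
the one-sided limits of a rational function bounded near `(x₀,y₀)` exist and are finite. -/
theorem log_quotient_curve_limits (p q : MvPolynomial (Fin 2) ℝ) (hq : q ≠ 0)
    (hcop : ∀ d : MvPolynomial (Fin 2) ℝ, d ∣ p → d ∣ q → IsUnit d) (x₀ y₀ : ℝ)
    (hb : BoundedNear p q (x₀, y₀))
    (N : ℕ) (φ : Fin N → ℝ) (ee : Fin N → ℚ)
    (hφ : ∀ k, φ k ≠ 0) (hee : StrictMono ee) (h1 : ∀ k, 1 ≤ ee k)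
    (e : ℚ) (he1 : 1 ≤ e) (heN : ∀ k, ee k ≤ e) :
    let g : ℝ → ℝ := fun x =>
      y₀ + (∑ k, φ k * |x - x₀| ^ ((ee k : ℝ))) + |x - x₀| ^ ((e : ℝ)) / Real.log |x - x₀|
    (∀ᶠ x in 𝓝[>] x₀, pev q (x, g x) ≠ 0) ∧
    (∀ᶠ x in 𝓝[<] x₀, pev q (x, g x) ≠ 0) ∧
    (∃ L : ℝ, Tendsto (fun x => pev p (x, g x) / pev q (x, g x)) (𝓝[>] x₀) (𝓝 L)) ∧
    (∃ L : ℝ, Tendsto (fun x => pev p (x, g x) / pev q (x, g x)) (𝓝[<] x₀) (𝓝 L)) := by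
  intro g
  have hR : Tendsto (fun x => |x - x₀|) (𝓝[>] x₀) (𝓝[>] 0) := by
    refine tendsto_nhdsWithin_iff.2 ⟨?_, ?_⟩
    · have : Continuous fun x : ℝ => |x - x₀| := by fun_prop
      simpa using (this.tendsto x₀).mono_left nhdsWithin_le_nhds
    · filter_upwards [self_mem_nhdsWithin] with x hx
      exact abs_pos.2 (sub_ne_zero.2 (ne_of_gt (Set.mem_Ioi.1 hx)))
  have hL : Tendsto (fun x => |x - x₀|) (𝓝[<] x₀) (𝓝[>] 0) := by
    refine tendsto_nhdsWithin_iff.2 ⟨?_, ?_⟩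
    · have : Continuous fun x : ℝ => |x - x₀| := by fun_prop
      simpa using (this.tendsto x₀).mono_left nhdsWithin_le_nhds
    · filter_upwards [self_mem_nhdsWithin] with x hx
      exact abs_pos.2 (sub_ne_zero.2 (ne_of_lt (Set.mem_Iio.1 hx)))
  have r := LQ.side p q hq x₀ y₀ hb N φ ee h1 e he1 g rfl (𝓝[>] x₀) 1 one_ne_zero hR (by
    filter_upwards [self_mem_nhdsWithin] with x hx
    have hx : x₀ < x := hx
    rw [abs_of_pos (by linarith)]; ring)
  have l := LQ.side p q hq x₀ y₀ hb N φ ee h1 e he1 g rfl (𝓝[<] x₀) (-1) (by norm_num) hL (by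
    filter_upwards [self_mem_nhdsWithin] with x hx
    have hx : x < x₀ := hx
    rw [abs_of_neg (by linarith)]; ring)
  exact ⟨r.1, l.1, r.2, l.2⟩
end

section
/- Let f = p/q be a rational function of two real variables bounded near (x₀,y₀). Let Φ(t) = Σ_{k=1}^N φ_k |t|^{e_k} be a function of type (i) (N ≥ 0) and let e be a rational number with e ≥ 1 and, if N ≥ 1, e ≥ e_N. Define g(x) = y₀ + Φ(x−x₀) + |x−x₀|^e · ln|x−x₀| for x ≠ x₀. Then both one-sided limits lim_{x→x₀⁺} f(x, g(x)) and lim_{x→x₀⁻} f(x, g(x)) exist and are finite (the curve eventually avoids the zero set of q on each side). -/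
open MvPolynomial Filter Topology

lemma aux_mono (k : ℕ) (hk : 0 < k) (j : ℤ) :
    Tendsto (fun s : ℝ => s ^ k * (Real.log s) ^ j) (𝓝[>] 0) (𝓝 0) := by
  have h := isLittleO_abs_log_rpow_rpow_nhdsGT_zero (s := -(k : ℝ)) (j : ℝ)
    (by simpa using hk)
  have h2 := h.tendsto_div_nhds_zero
  rw [tendsto_zero_iff_abs_tendsto_zero]
  refine h2.congr' ?_
  filter_upwards [self_mem_nhdsWithin] with s hs
  have hs : 0 < s := hs
  simp only [Function.comp]
  rw [Real.rpow_intCast, Real.rpow_neg hs.le, Real.rpow_natCast, abs_mul, abs_zpow, abs_pow,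
    abs_of_pos hs]
  rw [div_inv_eq_mul, mul_comm]

lemma aux_small (P : Polynomial (Polynomial ℝ)) :
    Tendsto (fun s : ℝ => s * P.evalEval (Real.log s) s) (𝓝[>] 0) (𝓝 0) := by
  induction P using Polynomial.induction_on' with
  | add p q hp hq =>
    simpa [mul_add] using hp.add hq
  | monomial n a =>
    induction a using Polynomial.induction_on' with
    | add p q hp hq =>
      have := hp.add hq
      simpa only [map_add, Polynomial.evalEval_add, mul_add, add_zero] using this
    | monomial j c =>
      have := (aux_mono (n + 1) (Nat.succ_pos n) j).const_mul c
      rw [mul_zero] at this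
      refine this.congr fun s => ?_
      simp [Polynomial.evalEval, Polynomial.eval_monomial]
      ring

lemma aux_logne : ∀ᶠ s : ℝ in 𝓝[>] 0, 0 < s ∧ Real.log s ≠ 0 := by
  filter_upwards [self_mem_nhdsWithin,
    Real.tendsto_log_nhdsGT_zero.eventually (eventually_lt_atBot 0)] with s hs hl
  exact ⟨hs, hl.ne⟩

lemma aux_lead (r : Polynomial ℝ) (hr : r ≠ 0) :
    Tendsto (fun s : ℝ => r.eval (Real.log s) / (Real.log s) ^ r.natDegree) (𝓝[>] 0)
      (𝓝 r.leadingCoeff) := by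
  have hc : r.leadingCoeff ≠ 0 := by simpa using hr
  have h := (Polynomial.isEquivalent_atBot_lead (P := r)).comp_tendsto
    Real.tendsto_log_nhdsGT_zero
  rw [Asymptotics.isEquivalent_iff_tendsto_one] at h
  · have h2 := h.mul_const r.leadingCoeff
    rw [one_mul] at h2
    refine h2.congr' ?_
    filter_upwards [aux_logne] with s hs
    have := pow_ne_zero r.natDegree hs.2
    simp only [Function.comp, Pi.div_apply]
    field_simp
  · filter_upwards [aux_logne] with s hs
    simpa using mul_ne_zero hc (pow_ne_zero r.natDegree hs.2)

lemma aux_asymp (P : Polynomial (Polynomial ℝ)) (hP : P ≠ 0) :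
    ∃ c : ℝ, c ≠ 0 ∧ ∃ i j : ℕ,
      Tendsto (fun s : ℝ => P.evalEval (Real.log s) s / (s ^ i * (Real.log s) ^ j))
        (𝓝[>] 0) (𝓝 c) := by
  obtain ⟨Q, hQ, hd⟩ := P.exists_eq_pow_rootMultiplicity_mul_and_not_dvd hP 0
  generalize P.rootMultiplicity 0 = i at hQ
  rw [map_zero, sub_zero] at hQ hd
  rw [Polynomial.X_dvd_iff] at hd
  refine ⟨(Q.coeff 0).leadingCoeff, by simpa using hd, i, (Q.coeff 0).natDegree, ?_⟩
  have h1 := aux_lead _ hd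
  have h2 : Tendsto (fun s : ℝ => (Real.log s ^ (Q.coeff 0).natDegree)⁻¹ *
      (s * Q.divX.evalEval (Real.log s) s)) (𝓝[>] 0) (𝓝 0) := by
    refine Filter.Tendsto.zero_mul_isBoundedUnder_le ?_ ?_ |>.congr fun s => mul_comm _ _
    · exact aux_small _
    · refine Filter.isBoundedUnder_of_eventually_le (a := 1) ?_
      filter_upwards [Real.tendsto_log_nhdsGT_zero.eventually (eventually_le_atBot (-1))] with s hs
      simp only [Function.comp, norm_inv, norm_pow, Real.norm_eq_abs]
      apply inv_le_one_of_one_le₀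
      apply one_le_pow₀
      rw [le_abs]; right; linarith
  have h3 := h1.add h2
  rw [add_zero] at h3
  refine h3.congr' ?_
  filter_upwards [aux_logne] with s hs
  have e1 : Q.evalEval (Real.log s) s = Q.divX.evalEval (Real.log s) s * s
      + (Q.coeff 0).eval (Real.log s) := by
    conv_lhs => rw [← Polynomial.divX_mul_X_add Q]
    simp [Polynomial.evalEval]
  have e2 : P.evalEval (Real.log s) s = s ^ i * Q.evalEval (Real.log s) s := by
    rw [hQ]; simp [Polynomial.evalEval]
  rw [e2, e1]
  have := pow_ne_zero (Q.coeff 0).natDegree hs.2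
  have := pow_ne_zero i hs.1.ne'
  field_simp
  ring

lemma aux_nonzero (P : Polynomial (Polynomial ℝ)) (hP : P ≠ 0) :
    ∀ᶠ s : ℝ in 𝓝[>] 0, P.evalEval (Real.log s) s ≠ 0 := by
  obtain ⟨c, hc, i, j, h⟩ := aux_asymp P hP
  filter_upwards [h.eventually_ne hc] with s hs h0
  simp [h0] at hs

lemma aux_ratio (P Q : Polynomial (Polynomial ℝ)) (hQ : Q ≠ 0) (M : ℝ)
    (hM : ∀ᶠ s : ℝ in 𝓝[>] 0,
      |P.evalEval (Real.log s) s / Q.evalEval (Real.log s) s| ≤ M) :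
    ∃ L : ℝ, Tendsto (fun s : ℝ => P.evalEval (Real.log s) s / Q.evalEval (Real.log s) s)
      (𝓝[>] 0) (𝓝 L) := by
  by_cases hP : P = 0
  · exact ⟨0, by simp [hP]⟩
  have nP := aux_nonzero P hP
  have nQ := aux_nonzero Q hQ
  obtain ⟨c, hc, i, j, h⟩ := aux_asymp P hP
  obtain ⟨c', hc', i', j', h'⟩ := aux_asymp Q hQ
  have hA := h.div h' hc'
  have hB := h'.div h hc
  have inv_contra : Tendsto (fun s : ℝ => Q.evalEval (Real.log s) s / P.evalEval (Real.log s) s)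
      (𝓝[>] 0) (𝓝 0) → False := by
    intro hz
    have hz' : Tendsto (fun s : ℝ => |Q.evalEval (Real.log s) s / P.evalEval (Real.log s) s| * M)
      (𝓝[>] 0) (𝓝 0) := by simpa using hz.abs.mul_const M
    obtain ⟨s, h1, h2, h3, h4⟩ := (hM.and (nP.and (nQ.and
      (hz'.eventually (gt_mem_nhds (zero_lt_one)))))).exists
    have := mul_le_mul_of_nonneg_left h1
      (abs_nonneg (Q.evalEval (Real.log s) s / P.evalEval (Real.log s) s))
    rw [← abs_mul, div_mul_div_cancel₀ h2, div_self h3, abs_one] at this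
    linarith
  rcases lt_trichotomy i' i with hi | hi | hi
  · refine ⟨c / c' * 0, (hA.mul (aux_mono (i - i') (by omega) ((j : ℤ) - j'))).congr' ?_⟩
    filter_upwards [aux_logne, nQ] with s hs hq
    obtain ⟨d, rfl⟩ := Nat.exists_eq_add_of_lt hi
    have a1 := hs.1.ne'
    have a2 := hs.2
    rw [zpow_sub₀ hs.2, zpow_natCast, zpow_natCast, show i' + d + 1 - i' = d + 1 by omega]
    simp only [Pi.div_apply]
    field_simp
    ring
  · subst hi
    rcases lt_trichotomy j j' with hj | hj | hj
    · have hl : Tendsto (fun s : ℝ => ((Real.log s)⁻¹) ^ (j' - j)) (𝓝[>] 0) (𝓝 0) := by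
        have := (tendsto_inv_atBot_zero.comp Real.tendsto_log_nhdsGT_zero).pow (j' - j)
        rw [zero_pow (by omega)] at this
        exact this
      refine ⟨c / c' * 0, (hA.mul hl).congr' ?_⟩
      filter_upwards [aux_logne, nQ] with s hs hq
      obtain ⟨d, rfl⟩ := Nat.exists_eq_add_of_lt hj
      have a1 := hs.1.ne'
      have a2 := hs.2
      rw [show j + d + 1 - j = d + 1 by omega, inv_pow]
      simp only [pow_succ, pow_add]
      simp only [Pi.div_apply]
      field_simp
    · subst hj
      refine ⟨c / c', hA.congr' ?_⟩
      filter_upwards [aux_logne, nQ] with s hs hq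
      have a1 := hs.1.ne'
      have a2 := hs.2
      simp only [Pi.div_apply]
      field_simp
    · exfalso
      apply inv_contra
      have hl : Tendsto (fun s : ℝ => ((Real.log s)⁻¹) ^ (j - j')) (𝓝[>] 0) (𝓝 0) := by
        have := (tendsto_inv_atBot_zero.comp Real.tendsto_log_nhdsGT_zero).pow (j - j')
        rw [zero_pow (by omega)] at this
        exact this
      have := hB.mul hl
      rw [mul_zero] at this
      refine this.congr' ?_
      filter_upwards [aux_logne, nP] with s hs hq
      obtain ⟨d, rfl⟩ := Nat.exists_eq_add_of_lt hj
      have a1 := hs.1.ne'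
      have a2 := hs.2
      rw [show j' + d + 1 - j' = d + 1 by omega, inv_pow]
      simp only [pow_succ, pow_add]
      simp only [Pi.div_apply]
      field_simp
  · exfalso
    apply inv_contra
    have := hB.mul (aux_mono (i' - i) (by omega) ((j' : ℤ) - j))
    rw [mul_zero] at this
    refine this.congr' ?_
    filter_upwards [aux_logne, nP] with s hs hq
    obtain ⟨d, rfl⟩ := Nat.exists_eq_add_of_lt hi
    have a1 := hs.1.ne'
    have a2 := hs.2
    rw [zpow_sub₀ hs.2, zpow_natCast, zpow_natCast, show i + d + 1 - i = d + 1 by omega]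
    simp only [Pi.div_apply]
    field_simp
    ring

/-- The pull back of a polynomial along the curve, with `s` the outer and `log s` the inner
variable. -/
noncomputable def auxT (A B : Polynomial (Polynomial ℝ)) (p : MvPolynomial (Fin 2) ℝ) :
    Polynomial (Polynomial ℝ) :=
  MvPolynomial.eval₂ (Polynomial.C.comp Polynomial.C) ![A, B] p

lemma auxT_eval (A B : Polynomial (Polynomial ℝ)) (p : MvPolynomial (Fin 2) ℝ) (l s : ℝ) :
    (auxT A B p).evalEval l s = pev p (A.evalEval l s, B.evalEval l s) := by
  have : (Polynomial.evalEvalRingHom l s) (auxT A B p)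
      = pev p (A.evalEval l s, B.evalEval l s) := by
    unfold auxT pev
    rw [← MvPolynomial.coe_eval₂Hom, ← RingHom.comp_apply]
    congr 1
    apply MvPolynomial.ringHom_ext
    · intro r
      simp
    · intro i
      fin_cases i <;> simp
  exact this

/-- The version in the parameter `s`. -/
lemma aux_s (p q : MvPolynomial (Fin 2) ℝ) (hq : q ≠ 0) (x₀ y₀ : ℝ)
    (hb : BoundedNear p q (x₀, y₀)) (N : ℕ) (φ : Fin N → ℝ) (n : Fin N → ℕ)
    (hn : ∀ k, 0 < n k) (m : ℕ) (hm : 0 < m) (D : ℕ) (hD : 0 < D) (σ : ℝ) (hσ : σ ≠ 0) :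
    (∀ᶠ s : ℝ in 𝓝[>] 0, pev q (x₀ + σ * s ^ D,
      y₀ + (∑ k, φ k * s ^ n k) + s ^ m * (D * Real.log s)) ≠ 0) ∧
    (∃ L : ℝ, Tendsto (fun s : ℝ => pev p (x₀ + σ * s ^ D,
        y₀ + (∑ k, φ k * s ^ n k) + s ^ m * (D * Real.log s)) /
      pev q (x₀ + σ * s ^ D,
        y₀ + (∑ k, φ k * s ^ n k) + s ^ m * (D * Real.log s))) (𝓝[>] 0) (𝓝 L)) := by
  let A : Polynomial (Polynomial ℝ) :=
    Polynomial.CC x₀ + Polynomial.CC σ * Polynomial.X ^ D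
  let B : Polynomial (Polynomial ℝ) :=
    Polynomial.CC y₀ + (∑ k, Polynomial.CC (φ k) * Polynomial.X ^ n k) +
      Polynomial.X ^ m * (Polynomial.CC (D : ℝ) * Polynomial.C Polynomial.X)
  have hA : ∀ l s, A.evalEval l s = x₀ + σ * s ^ D := by
    intro l s; simp [A, Polynomial.evalEval]
  have hB : ∀ l s, B.evalEval l s = y₀ + (∑ k, φ k * s ^ n k) + s ^ m * (D * l) := by
    intro l s; simp [B, Polynomial.evalEval, Polynomial.eval_finsetSum]
  have hT : ∀ (r : MvPolynomial (Fin 2) ℝ) (s : ℝ), pev r (x₀ + σ * s ^ D,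
      y₀ + (∑ k, φ k * s ^ n k) + s ^ m * (D * Real.log s))
      = (auxT A B r).evalEval (Real.log s) s := by
    intro r s; rw [auxT_eval, hA, hB]
  have hDR : (D : ℝ) ≠ 0 := by exact_mod_cast hD.ne'
  have hTq : auxT A B q ≠ 0 := by
    intro h0
    apply hq
    let S : Fin 2 → Set ℝ := ![Set.image (fun t => x₀ + σ * t) (Set.Ioi 0), Set.univ]
    refine MvPolynomial.funext_set S ?_ ?_
    · intro i
      fin_cases i
      · exact (Set.Ioi_infinite 0).image (fun a _ b _ hab => by simpa [hσ] using hab)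
      · exact Set.infinite_univ
    · intro v hv
      obtain ⟨t, ht, hvt⟩ := hv 0 (Set.mem_univ _)
      have ht : 0 < t := ht
      simp only at hvt
      set s := t ^ ((D : ℝ)⁻¹) with hs
      have hs0 : 0 < s := Real.rpow_pos_of_pos ht _
      have hsD : s ^ D = t := Real.rpow_inv_natCast_pow ht.le hD.ne'
      have hsm : s ^ m ≠ 0 := pow_ne_zero _ hs0.ne'
      let l := (v 1 - (y₀ + ∑ k, φ k * s ^ n k)) / (s ^ m * D)
      have := auxT_eval A B q l s
      rw [h0, hA, hB, hsD, hvt] at this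
      have e1 : y₀ + (∑ k, φ k * s ^ n k) + s ^ m * (D * l) = v 1 := by
        simp only [l]; field_simp; ring
      rw [e1] at this
      have e2 : v = ![v 0, v 1] := by ext i; fin_cases i <;> rfl
      rw [e2, map_zero]
      simpa [pev] using this.symm
  simp only [hT]
  have hne := aux_nonzero _ hTq
  refine ⟨hne, ?_⟩
  obtain ⟨U, hU, M, hM⟩ := hb
  refine aux_ratio _ _ hTq M ?_
  have hpow : ∀ k : ℕ, 0 < k → Tendsto (fun s : ℝ => s ^ k) (𝓝[>] 0) (𝓝 0) := by
    intro k hk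
    simpa using aux_mono k hk 0
  have hcurve : Tendsto (fun s : ℝ => (x₀ + σ * s ^ D,
      y₀ + (∑ k, φ k * s ^ n k) + s ^ m * (D * Real.log s))) (𝓝[>] 0) (𝓝 (x₀, y₀)) := by
    refine Tendsto.prodMk_nhds ?_ ?_
    · simpa using ((hpow D hD).const_mul σ).const_add x₀
    · have h1 : Tendsto (fun s : ℝ => ∑ k, φ k * s ^ n k) (𝓝[>] 0) (𝓝 (∑ k, φ k * 0)) :=
        tendsto_finsetSum _ fun k _ => (hpow _ (hn k)).const_mul _
      have h2 := (aux_mono m hm 1).const_mul (D : ℝ)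
      have h3 := (h1.const_add y₀).add h2
      simp only [mul_zero, Finset.sum_const_zero, add_zero] at h3
      refine h3.congr fun s => ?_
      rw [zpow_one]; ring
  filter_upwards [hcurve.eventually hU, hne] with s hs hs2
  have := hM _ hs
  rw [hT, hT] at this
  exact this hs2

lemma aux_den (N : ℕ) (ee : Fin N → ℚ) (h1 : ∀ k, 1 ≤ ee k) (e : ℚ) (he1 : 1 ≤ e) :
    ∃ D : ℕ, 0 < D ∧ ∃ n : Fin N → ℕ, (∀ k, 0 < n k ∧ (ee k : ℝ) * D = n k) ∧
      ∃ m : ℕ, 0 < m ∧ (e : ℝ) * D = m := by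
  have key : ∀ (D : ℕ) (a : ℚ), 0 < D → 1 ≤ a → a.den ∣ D →
      ∃ n : ℕ, 0 < n ∧ (a : ℝ) * D = n := by
    rintro D a hD ha ⟨c, rfl⟩
    have hnum : 0 < a.num := Rat.num_pos.2 (by linarith)
    have hc : 0 < c := Nat.pos_of_mul_pos_left hD
    refine ⟨a.num.toNat * c, Nat.mul_pos (by omega) hc, ?_⟩
    have h2 : ((a.num.toNat : ℤ) : ℚ) = a.num := by rw [Int.toNat_of_nonneg hnum.le]
    have h3 : a * a.den = a.num := Rat.mul_den_eq_num a
    have h4 : a * ((a.den * c : ℕ) : ℚ) = ((a.num.toNat * c : ℕ) : ℚ) := by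
      push_cast at h2 ⊢
      rw [h2, ← mul_assoc, h3]
    exact_mod_cast h4
  have hD : 0 < e.den * ∏ k, (ee k).den :=
    Nat.mul_pos e.den_pos (Finset.prod_pos fun k _ => (ee k).den_pos)
  refine ⟨_, hD, ?_⟩
  have hk : ∀ k, ∃ n : ℕ, 0 < n ∧ (ee k : ℝ) * ((e.den * ∏ k, (ee k).den : ℕ) : ℝ) = n :=
    fun k => key _ _ hD (h1 k) (Dvd.dvd.mul_left (Finset.dvd_prod_of_mem _ (Finset.mem_univ k)) _)
  choose n hn using hk
  exact ⟨n, hn, key _ _ hD he1 (Dvd.intro _ rfl)⟩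

/-- The version in the parameter `t = |x - x₀|`. -/
lemma aux_t (p q : MvPolynomial (Fin 2) ℝ) (hq : q ≠ 0) (x₀ y₀ : ℝ)
    (hb : BoundedNear p q (x₀, y₀)) (N : ℕ) (φ : Fin N → ℝ) (ee : Fin N → ℚ)
    (h1 : ∀ k, 1 ≤ ee k) (e : ℚ) (he1 : 1 ≤ e) (σ : ℝ) (hσ : σ ≠ 0) :
    (∀ᶠ t : ℝ in 𝓝[>] 0, pev q (x₀ + σ * t,
      y₀ + (∑ k, φ k * t ^ (ee k : ℝ)) + t ^ (e : ℝ) * Real.log t) ≠ 0) ∧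
    (∃ L : ℝ, Tendsto (fun t : ℝ => pev p (x₀ + σ * t,
        y₀ + (∑ k, φ k * t ^ (ee k : ℝ)) + t ^ (e : ℝ) * Real.log t) /
      pev q (x₀ + σ * t,
        y₀ + (∑ k, φ k * t ^ (ee k : ℝ)) + t ^ (e : ℝ) * Real.log t)) (𝓝[>] 0) (𝓝 L)) := by
  obtain ⟨D, hD, n, hn, m, hm, hmD⟩ := aux_den N ee h1 e he1
  obtain ⟨ha, L, hL⟩ := aux_s p q hq x₀ y₀ hb N φ n (fun k => (hn k).1) m hm D hD σ hσ
  have hDR : (0 : ℝ) < D := by exact_mod_cast hD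
  have hroot : Tendsto (fun t : ℝ => t ^ ((D : ℝ)⁻¹)) (𝓝[>] 0) (𝓝[>] 0) := by
    refine tendsto_nhdsWithin_iff.2 ⟨?_, ?_⟩
    · have hc : ContinuousAt (fun t : ℝ => t ^ ((D : ℝ)⁻¹)) 0 :=
        Real.continuousAt_rpow_const _ _ (Or.inr (by positivity))
      have := hc.tendsto
      rw [Real.zero_rpow (by positivity)] at this
      exact this.mono_left nhdsWithin_le_nhds
    · filter_upwards [self_mem_nhdsWithin] with t ht using Real.rpow_pos_of_pos ht _
  have hpt : ∀ t : ℝ, 0 < t → (x₀ + σ * (t ^ ((D : ℝ)⁻¹)) ^ D,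
      y₀ + (∑ k, φ k * (t ^ ((D : ℝ)⁻¹)) ^ n k) +
        (t ^ ((D : ℝ)⁻¹)) ^ m * (D * Real.log (t ^ ((D : ℝ)⁻¹))))
      = (x₀ + σ * t, y₀ + (∑ k, φ k * t ^ (ee k : ℝ)) + t ^ (e : ℝ) * Real.log t) := by
    intro t ht
    have hp : ∀ (a : ℝ) (i : ℕ), a * D = i → (t ^ ((D : ℝ)⁻¹)) ^ i = t ^ a := by
      intro a i hai
      rw [← Real.rpow_natCast, ← Real.rpow_mul ht.le, ← hai]
      congr 1; field_simp
    rw [Real.rpow_inv_natCast_pow ht.le hD.ne', hp _ m hmD, Real.log_rpow ht]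
    simp only [fun k => hp _ (n k) (hn k).2]
    rw [mul_inv_cancel_left₀ hDR.ne']
  constructor
  · filter_upwards [hroot.eventually ha, self_mem_nhdsWithin] with t ht ht0
    rwa [hpt t ht0] at ht
  · refine ⟨L, (hL.comp hroot).congr' ?_⟩
    filter_upwards [self_mem_nhdsWithin] with t ht0
    simp only [Function.comp, hpt t ht0]

/-- Along the curve `y = y₀ + Φ(x-x₀) + |x-x₀|^e · ln|x-x₀|` with `Φ` of type (i) and
`e` rational (`e ≥ 1`, `e ≥ e_N`), the denominator is eventually nonzero on each side and
the one-sided limits of a rational function bounded near `(x₀,y₀)` exist and are finite. -/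
theorem log_product_curve_limits (p q : MvPolynomial (Fin 2) ℝ) (hq : q ≠ 0)
    (hcop : ∀ d : MvPolynomial (Fin 2) ℝ, d ∣ p → d ∣ q → IsUnit d) (x₀ y₀ : ℝ)
    (hb : BoundedNear p q (x₀, y₀))
    (N : ℕ) (φ : Fin N → ℝ) (ee : Fin N → ℚ)
    (hφ : ∀ k, φ k ≠ 0) (hee : StrictMono ee) (h1 : ∀ k, 1 ≤ ee k)
    (e : ℚ) (he1 : 1 ≤ e) (heN : ∀ k, ee k ≤ e) :
    let g : ℝ → ℝ := fun x =>
      y₀ + (∑ k, φ k * |x - x₀| ^ ((ee k : ℝ))) + |x - x₀| ^ ((e : ℝ)) * Real.log |x - x₀|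
    (∀ᶠ x in 𝓝[>] x₀, pev q (x, g x) ≠ 0) ∧
    (∀ᶠ x in 𝓝[<] x₀, pev q (x, g x) ≠ 0) ∧
    (∃ L : ℝ, Tendsto (fun x => pev p (x, g x) / pev q (x, g x)) (𝓝[>] x₀) (𝓝 L)) ∧
    (∃ L : ℝ, Tendsto (fun x => pev p (x, g x) / pev q (x, g x)) (𝓝[<] x₀) (𝓝 L)) := by
  intro g
  have hR := aux_t p q hq x₀ y₀ hb N φ ee h1 e he1 1 one_ne_zero
  have hL := aux_t p q hq x₀ y₀ hb N φ ee h1 e he1 (-1) (by norm_num)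
  have tR : Tendsto (fun x : ℝ => |x - x₀|) (𝓝[>] x₀) (𝓝[>] 0) := by
    refine tendsto_nhdsWithin_iff.2 ⟨?_, ?_⟩
    · have hc : ContinuousAt (fun x : ℝ => |x - x₀|) x₀ := by fun_prop
      have := hc.tendsto
      simp only [sub_self, abs_zero] at this
      exact this.mono_left nhdsWithin_le_nhds
    · filter_upwards [self_mem_nhdsWithin] with x hx
      exact abs_pos.2 (sub_ne_zero.2 (ne_of_gt (Set.mem_Ioi.1 hx)))
  have tL : Tendsto (fun x : ℝ => |x - x₀|) (𝓝[<] x₀) (𝓝[>] 0) := by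
    refine tendsto_nhdsWithin_iff.2 ⟨?_, ?_⟩
    · have hc : ContinuousAt (fun x : ℝ => |x - x₀|) x₀ := by fun_prop
      have := hc.tendsto
      simp only [sub_self, abs_zero] at this
      exact this.mono_left nhdsWithin_le_nhds
    · filter_upwards [self_mem_nhdsWithin] with x hx
      exact abs_pos.2 (sub_ne_zero.2 (ne_of_lt (Set.mem_Iio.1 hx)))
  have eR : ∀ x, x₀ < x → x₀ + 1 * |x - x₀| = x := by
    intro x hx
    rw [abs_of_pos (sub_pos.2 hx)]; ring
  have eL : ∀ x, x < x₀ → x₀ + (-1) * |x - x₀| = x := by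
    intro x hx
    rw [abs_of_neg (sub_neg.2 hx)]; ring
  obtain ⟨hR1, LR, hR2⟩ := hR
  obtain ⟨hL1, LL, hL2⟩ := hL
  refine ⟨?_, ?_, ⟨LR, (hR2.comp tR).congr' ?_⟩, ⟨LL, (hL2.comp tL).congr' ?_⟩⟩
  · filter_upwards [tR.eventually hR1, self_mem_nhdsWithin] with x hx hx0
    rwa [eR x hx0] at hx
  · filter_upwards [tL.eventually hL1, self_mem_nhdsWithin] with x hx hx0
    rwa [eL x hx0] at hx
  · filter_upwards [self_mem_nhdsWithin] with x hx0
    simp only [Function.comp, eR x hx0, g]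
  · filter_upwards [self_mem_nhdsWithin] with x hx0
    simp only [Function.comp, eL x hx0, g]
end

section
/- Let f = p/q be a rational function of two real variables bounded near (x₀,y₀), let Σ_{k=1}^∞ φ_k |t|^{e_k} be a series of type (ii) with partial sums Φ_N, and for each N ≥ 1 let L_N = lim_{x→x₀⁺} f(x, y₀+Φ_N(x−x₀)) (these one-sided limits exist and are finite). Then the sequence (L_N)_{N≥1} converges to a finite limit as N → ∞. -/
open MvPolynomial Filter Topology

/-- `f t * t^(-w)` tends to `a` as `t → 0⁺`. -/
def LTm (f : ℝ → ℝ) (a w : ℝ) : Prop :=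
  Tendsto (fun t => f t * t ^ (-w)) (𝓝[>] 0) (𝓝 a)

lemma LTm.congr {f g : ℝ → ℝ} {a w : ℝ} (h : LTm f a w) (hfg : ∀ t, 0 < t → f t = g t) :
    LTm g a w := by
  refine Tendsto.congr' ?_ h
  filter_upwards [self_mem_nhdsWithin] with t ht
  rw [hfg t ht]

lemma LTm.mul {f g : ℝ → ℝ} {a b w u : ℝ} (hf : LTm f a w) (hg : LTm g b u) :
    LTm (fun t => f t * g t) (a * b) (w + u) := by
  refine Tendsto.congr' ?_ (Tendsto.mul hf hg)
  filter_upwards [self_mem_nhdsWithin] with t ht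
  have ht : 0 < t := ht
  rw [neg_add, Real.rpow_add ht]; ring

lemma LTm.rpow (c w : ℝ) : LTm (fun t => c * t ^ w) c w := by
  refine Tendsto.congr' ?_ tendsto_const_nhds
  filter_upwards [self_mem_nhdsWithin] with t ht
  have ht : 0 < t := ht
  rw [mul_assoc, ← Real.rpow_add ht]; simp

lemma LTm.const (c : ℝ) : LTm (fun _ => c) c 0 := by
  simpa using LTm.rpow c 0

lemma LTm.pow {f : ℝ → ℝ} {a w : ℝ} (hf : LTm f a w) (n : ℕ) :
    LTm (fun t => f t ^ n) (a ^ n) (n * w) := by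
  induction n with
  | zero => simpa using LTm.const 1
  | succ n ih =>
    have := ih.mul hf
    simp only [pow_succ]
    convert this using 1
    push_cast; ring

lemma LTm.zero_of_lt {f : ℝ → ℝ} {a w v : ℝ} (hf : LTm f a w) (h : v < w) : LTm f 0 v := by
  have h1 : Tendsto (fun t : ℝ => t ^ (w - v)) (𝓝[>] 0) (𝓝 0) := by
    have := (Real.continuousAt_rpow_const 0 (w - v) (Or.inr (by linarith))).tendsto
    rw [Real.zero_rpow (by linarith)] at this
    exact this.mono_left nhdsWithin_le_nhds
  have h2 := Tendsto.mul hf h1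
  rw [mul_zero] at h2
  refine Tendsto.congr' ?_ h2
  filter_upwards [self_mem_nhdsWithin] with t ht
  have ht : 0 < t := ht
  rw [mul_assoc, ← Real.rpow_add ht]; congr 2; ring

lemma LTm.add {f g : ℝ → ℝ} {a b w : ℝ} (hf : LTm f a w) (hg : LTm g b w) :
    LTm (fun t => f t + g t) (a + b) w := by
  refine Tendsto.congr ?_ (Tendsto.add hf hg)
  intro t; ring

lemma LTm.sub {f g : ℝ → ℝ} {a b w : ℝ} (hf : LTm f a w) (hg : LTm g b w) :
    LTm (fun t => f t - g t) (a - b) w := by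
  refine Tendsto.congr ?_ (Tendsto.sub hf hg)
  intro t; ring

lemma LTm.sum {ι : Type*} (s : Finset ι) {f : ι → ℝ → ℝ} {a : ι → ℝ} {w : ℝ}
    (h : ∀ i ∈ s, LTm (f i) (a i) w) :
    LTm (fun t => ∑ i ∈ s, f i t) (∑ i ∈ s, a i) w := by
  refine Tendsto.congr ?_ (tendsto_finsetSum s h)
  intro t; rw [Finset.sum_mul]

lemma LTm.unique {f : ℝ → ℝ} {a b w : ℝ} (hf : LTm f a w) (hg : LTm f b w) : a = b :=
  tendsto_nhds_unique hf hg

lemma LTm.div {f g : ℝ → ℝ} {a b w u : ℝ} (hf : LTm f a w) (hg : LTm g b u) (hb : b ≠ 0) :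
    LTm (fun t => f t / g t) (a / b) (w - u) := by
  refine Tendsto.congr' ?_ (Tendsto.div hf hg hb)
  filter_upwards [self_mem_nhdsWithin] with t ht
  have ht : 0 < t := ht
  have h3 := (Real.rpow_pos_of_pos ht u).ne'
  have h5 := (Real.rpow_pos_of_pos ht w).ne'
  have h4 : t ^ (-(w - u)) = t ^ (-w) * t ^ u := by
    rw [← Real.rpow_add ht]; congr 1; ring
  simp only [Pi.div_apply]
  rw [h4, Real.rpow_neg ht.le, Real.rpow_neg ht.le]
  by_cases h6 : g t = 0
  · simp [h6]
  field_simp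

/-- A sum with a unique term of least order. -/
lemma LTm.sum_dom {ι : Type*} [DecidableEq ι] (s : Finset ι) {f : ι → ℝ → ℝ} {a w : ι → ℝ} {m : ι}
    (hm : m ∈ s) (h : ∀ i ∈ s, LTm (f i) (a i) (w i)) (hlt : ∀ i ∈ s, i ≠ m → w m < w i) :
    LTm (fun t => ∑ i ∈ s, f i t) (a m) (w m) := by
  have := LTm.sum s (f := f) (a := fun i => if i = m then a m else 0) (w := w m) ?_
  · simpa [hm] using this
  · intro i hi
    by_cases him : i = m
    · subst him; simpa using h i hi
    · simpa [him] using (h i hi).zero_of_lt (hlt i hi him)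

/-- Generalized polynomials. -/
noncomputable def gev (t : ℝ) (ht : 0 < t) : AddMonoidAlgebra ℝ ℝ →ₐ[ℝ] ℝ :=
  AddMonoidAlgebra.lift ℝ ℝ ℝ
    { toFun := fun γ => t ^ (Multiplicative.toAdd γ)
      map_one' := by simp
      map_mul' := fun x y => by simp [Real.rpow_add ht] }

def GP (f : ℝ → ℝ) : Prop := ∃ c : AddMonoidAlgebra ℝ ℝ, ∀ t (ht : 0 < t), f t = gev t ht c

lemma GP.add {f g : ℝ → ℝ} (hf : GP f) (hg : GP g) : GP (fun t => f t + g t) := by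
  obtain ⟨c, hc⟩ := hf
  obtain ⟨d, hd⟩ := hg
  exact ⟨c + d, fun t ht => by rw [map_add, ← hc t ht, ← hd t ht]⟩

lemma GP.mul {f g : ℝ → ℝ} (hf : GP f) (hg : GP g) : GP (fun t => f t * g t) := by
  obtain ⟨c, hc⟩ := hf
  obtain ⟨d, hd⟩ := hg
  exact ⟨c * d, fun t ht => by rw [map_mul, ← hc t ht, ← hd t ht]⟩

lemma GP.rpow (c w : ℝ) : GP (fun t => c * t ^ w) :=
  ⟨AddMonoidAlgebra.single w c, fun t ht => by simp [gev]⟩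

lemma GP.const (c : ℝ) : GP (fun _ => c) := by simpa using GP.rpow c 0

lemma GP.id : GP (fun t => t) := by simpa using GP.rpow 1 1

lemma GP.pow {f : ℝ → ℝ} (hf : GP f) (n : ℕ) : GP (fun t => f t ^ n) := by
  obtain ⟨c, hc⟩ := hf
  exact ⟨c ^ n, fun t ht => by rw [map_pow, ← hc t ht]⟩

lemma GP.sum {ι : Type*} (s : Finset ι) {f : ι → ℝ → ℝ} (h : ∀ i ∈ s, GP (f i)) :
    GP (fun t => ∑ i ∈ s, f i t) := by
  classical
  induction s using Finset.induction_on with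
  | empty => simpa using GP.const 0
  | insert i s hi ih =>
    simp only [Finset.sum_insert hi]
    exact (h i (by simp)).add (ih fun j hj => h j (by simp [hj]))

lemma GP.lead {f : ℝ → ℝ} (hf : GP f) :
    (∀ t, 0 < t → f t = 0) ∨ ∃ a w, a ≠ 0 ∧ LTm f a w := by
  classical
  obtain ⟨c, hc⟩ := hf
  by_cases h0 : c.coeff.support = ∅
  · left
    intro t ht
    rw [hc t ht, gev, AddMonoidAlgebra.lift_apply, Finsupp.sum, h0]; simp
  · right
    have hne := Finset.nonempty_iff_ne_empty.mpr h0
    refine ⟨c.coeff (c.coeff.support.min' hne), c.coeff.support.min' hne,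
      Finsupp.mem_support_iff.mp (Finset.min'_mem _ hne), ?_⟩
    refine LTm.congr (LTm.sum_dom c.coeff.support (f := fun γ t => c.coeff γ * t ^ γ)
      (a := fun γ => c.coeff γ) (w := fun γ => γ) (Finset.min'_mem _ hne)
      (fun i _ => LTm.rpow _ _) ?_) ?_
    · intro i hi hne'
      exact lt_of_le_of_ne (Finset.min'_le _ _ hi) (Ne.symm hne')
    · intro t ht
      rw [hc t ht, gev, AddMonoidAlgebra.lift_apply, Finsupp.sum]
      simp

/-- For pairs: eventually strict comparison. -/
lemma aff_pair {h : ℕ → ℝ} (hh : StrictMono h) (u v : ℝ) (m n : ℕ) (hmn : m < n) :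
    (∀ᶠ N in atTop, u + m * h N < v + n * h N) ∨ (∀ᶠ N in atTop, v + n * h N < u + m * h N) := by
  have hc : (0 : ℝ) < (n : ℝ) - m := by
    have : (m : ℝ) < n := by exact_mod_cast hmn
    linarith
  by_cases hx : ∃ N, u + m * h N ≤ v + n * h N
  · left
    obtain ⟨N, hN⟩ := hx
    filter_upwards [eventually_gt_atTop N] with M hM
    have := mul_lt_mul_of_pos_left (hh hM) hc
    nlinarith
  · right
    push Not at hx
    exact Eventually.of_forall hx

lemma aff_dom {h : ℕ → ℝ} (hh : StrictMono h) (u : ℕ → ℝ) (s : Finset ℕ) (hs : s.Nonempty) :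
    ∃ m ∈ s, ∀ᶠ N in atTop, ∀ i ∈ s, i ≠ m → u m + m * h N < u i + i * h N := by
  induction hs using Finset.Nonempty.cons_induction with
  | singleton a => exact ⟨a, by simp, Eventually.of_forall (by simp)⟩
  | cons a s ha hs ih =>
    obtain ⟨m, hm, H⟩ := ih
    have hne : a ≠ m := fun h => ha (h ▸ hm)
    have key : (∀ᶠ N in atTop, u a + a * h N < u m + m * h N) ∨
        (∀ᶠ N in atTop, u m + m * h N < u a + a * h N) := by
      rcases lt_or_gt_of_ne hne with h1 | h1
      · exact aff_pair hh _ _ _ _ h1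
      · exact (aff_pair hh _ _ _ _ h1).symm
    rcases key with h1 | h1
    · refine ⟨a, by simp, ?_⟩
      filter_upwards [H, h1] with N HN hN i hi hia
      rw [Finset.mem_cons] at hi
      rcases hi with rfl | hi
      · exact absurd rfl hia
      · by_cases him : i = m
        · subst him; exact hN
        · exact hN.trans (HN i hi him)
    · refine ⟨m, by simp [hm], ?_⟩
      filter_upwards [H, h1] with N HN hN i hi him
      rw [Finset.mem_cons] at hi
      rcases hi with rfl | hi
      · exact hN
      · exact HN i hi him

/-- Evaluation of a polynomial in `ℝ[t][s]` along a curve `s = Φ t`. -/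
noncomputable def ev (Φ : ℝ → ℝ) (F : Polynomial (Polynomial ℝ)) (t : ℝ) : ℝ :=
  F.eval₂ (Polynomial.evalRingHom t) (Φ t)

lemma GP.poly (c : Polynomial ℝ) : GP (fun t => c.eval t) := by
  simp only [Polynomial.eval_eq_sum_range]
  exact GP.sum _ fun i _ => (GP.const _).mul (GP.id.pow i)

lemma GP.ev {Φ : ℝ → ℝ} (hΦ : GP Φ) (F : Polynomial (Polynomial ℝ)) : GP (ev Φ F) := by
  unfold _root_.ev
  simp only [Polynomial.eval₂_eq_sum_range]
  exact GP.sum _ fun i _ => (GP.poly _).mul (hΦ.pow i)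

lemma lead_poly (c : Polynomial ℝ) (hc : c ≠ 0) : ∃ a w, a ≠ 0 ∧ LTm (fun t => c.eval t) a w := by
  rcases (GP.poly c).lead with h | h
  · exfalso
    apply hc
    refine Polynomial.eq_zero_of_infinite_isRoot c ((Set.Ioi_infinite (0 : ℝ)).mono ?_)
    intro t ht
    exact h t ht
  · exact h

lemma ev_taylor (Φ : ℝ → ℝ) (F : Polynomial (Polynomial ℝ)) (t d : ℝ) :
    F.eval₂ (Polynomial.evalRingHom t) (Φ t + d) =
      ev Φ F t + ∑ j ∈ Finset.Icc 1 F.natDegree, ev Φ (Polynomial.hasseDeriv j F) t * d ^ j := by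
  set σ := Polynomial.evalRingHom t
  have hm : ∀ j, (F.map σ).hasseDeriv j = (F.hasseDeriv j).map σ := by
    intro j
    ext n
    simp [Polynomial.hasseDeriv_coeff]
  have h1 : (F.map σ).eval (d + Φ t) = ∑ j ∈ Finset.range (F.natDegree + 1),
      ev Φ (Polynomial.hasseDeriv j F) t * d ^ j := by
    rw [← Polynomial.taylor_eval, Polynomial.eval_eq_sum_range' (n := F.natDegree + 1)]
    · refine Finset.sum_congr rfl fun j _ => ?_
      rw [Polynomial.taylor_coeff, hm, Polynomial.eval_map]; rfl
    · rw [Polynomial.natDegree_taylor]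
      exact Nat.lt_succ_of_le Polynomial.natDegree_map_le
  rw [← Polynomial.eval_map, add_comm (Φ t) d, h1, Finset.range_eq_Ico,
    Finset.sum_eq_sum_Ico_succ_bot (by omega)]
  simp
  rfl

/-- Partial sums. -/
noncomputable def PS (φ e : ℕ → ℝ) (N : ℕ) (t : ℝ) : ℝ := ∑ k ∈ Finset.range N, φ k * t ^ e k

lemma GP.PS (φ e : ℕ → ℝ) (N : ℕ) : GP (PS φ e N) :=
  GP.sum _ fun _ _ => GP.rpow _ _

def TypeA (φ e : ℕ → ℝ) (F : Polynomial (Polynomial ℝ)) : Prop :=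
  ∃ a w, a ≠ 0 ∧ ∀ᶠ N in atTop, LTm (ev (PS φ e N) F) a w

lemma typeA_const (φ e : ℕ → ℝ) (F : Polynomial (Polynomial ℝ)) (hF : F ≠ 0)
    (hd : F.natDegree = 0) : TypeA φ e F := by
  obtain ⟨c, rfl⟩ := Polynomial.natDegree_eq_zero.mp hd
  have hc : c ≠ 0 := by rintro rfl; simp at hF
  obtain ⟨a, w, ha, h⟩ := lead_poly c hc
  refine ⟨a, w, ha, Eventually.of_forall fun N => h.congr fun t _ => ?_⟩
  simp [ev]

lemma min_case (φ e : ℕ → ℝ) (hφ : ∀ k, φ k ≠ 0) (he : StrictMono e)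
    (G : Polynomial (Polynomial ℝ)) (hG : G ≠ 0)
    (hlow : ∀ F : Polynomial (Polynomial ℝ), F ≠ 0 → F.natDegree < G.natDegree → TypeA φ e F)
    (hGA : ¬ TypeA φ e G) :
    ∃ A h : ℕ → ℝ, (∀ N, A N ≠ 0) ∧ StrictMono h ∧
      ∀ᶠ N in atTop, LTm (ev (PS φ e N) G) (A N) (h N) := by
  classical
  have hd : 1 ≤ G.natDegree := by
    by_contra hlt
    exact hGA (typeA_const φ e G hG (by omega))
  have hAj : ∀ j ∈ Finset.Icc 1 G.natDegree, TypeA φ e (Polynomial.hasseDeriv j G) := by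
    intro j hj
    rw [Finset.mem_Icc] at hj
    refine hlow _ ?_ ?_
    · intro h0
      have := congrArg (fun p => Polynomial.coeff p (G.natDegree - j)) h0
      simp only [Polynomial.hasseDeriv_coeff, Nat.sub_add_cancel hj.2, Polynomial.coeff_zero,
        mul_eq_zero, Nat.cast_eq_zero] at this
      rcases this with h | h
      · exact absurd h (Nat.choose_pos hj.2).ne'
      · exact hG (Polynomial.leadingCoeff_eq_zero.mp h)
    · have := Polynomial.natDegree_hasseDeriv_le G j
      omega
  choose! a w ha hT using hAj
  obtain ⟨m, hm, hdom⟩ := aff_dom he w (Finset.Icc 1 G.natDegree) ⟨1, by simp [hd]⟩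
  have hm1 : 1 ≤ m := (Finset.mem_Icc.mp hm).1
  have hmR : (0 : ℝ) < m := by exact_mod_cast hm1
  have hv : StrictMono (fun N => w m + m * e N) := by
    intro M N hMN
    have := mul_lt_mul_of_pos_left (he hMN) hmR
    simp only; linarith
  have hT' : ∀ᶠ N in atTop, ∀ j ∈ Finset.Icc 1 G.natDegree,
      LTm (ev (PS φ e N) (Polynomial.hasseDeriv j G)) (a j) (w j) :=
    (Filter.eventually_all_finset _).mpr hT
  -- the difference
  have hD : ∀ᶠ N in atTop, LTm (fun t => ev (PS φ e (N + 1)) G t - ev (PS φ e N) G t)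
      (a m * φ N ^ m) (w m + m * e N) := by
    filter_upwards [hT', hdom] with N h1 h2
    have h3 := LTm.sum_dom (Finset.Icc 1 G.natDegree)
      (f := fun j t => ev (PS φ e N) (Polynomial.hasseDeriv j G) t * (φ N * t ^ e N) ^ j)
      (a := fun j => a j * φ N ^ j) (w := fun j => w j + j * e N) hm
      (fun j hj => (h1 j hj).mul ((LTm.rpow (φ N) (e N)).pow j)) h2
    refine h3.congr fun t _ => ?_
    have h4 := ev_taylor (PS φ e N) G t (φ N * t ^ e N)
    have h5 : ev (PS φ e (N + 1)) G t =
        G.eval₂ (Polynomial.evalRingHom t) (PS φ e N t + φ N * t ^ e N) := by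
      simp only [ev, PS, Finset.sum_range_succ]
    rw [h5, h4]; ring
  obtain ⟨N0, hN0⟩ := eventually_atTop.mp hD
  by_cases hA : ∃ N ≥ N0, ∃ b u, b ≠ 0 ∧ u < w m + m * e N ∧ LTm (ev (PS φ e N) G) b u
  · exfalso
    obtain ⟨N, hN, b, u, hb, hu, hL⟩ := hA
    apply hGA
    refine ⟨b, u, hb, eventually_atTop.mpr ⟨N, fun M hM => ?_⟩⟩
    induction M, hM using Nat.le_induction with
    | base => exact hL
    | succ M hM ih =>
      have h1 := (hN0 M (hN.le.trans hM)).zero_of_lt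
        (lt_of_lt_of_le hu (hv.monotone hM))
      have h2 := ih.add h1
      rw [add_zero] at h2
      exact h2.congr fun t _ => by ring
  · have hB : ∀ N ≥ N0, ∃ b, LTm (ev (PS φ e N) G) b (w m + m * e N) := by
      intro N hN
      rcases ((GP.PS φ e N).ev G).lead with h | ⟨b, u, hb, h⟩
      · refine ⟨0, (show LTm (fun _ => (0 : ℝ)) 0 _ from ?_).congr fun t ht => (h t ht).symm⟩
        simpa using LTm.rpow 0 (w m + m * e N)
      · have hu : w m + m * e N ≤ u := by
          by_contra hlt
          exact hA ⟨N, hN, b, u, hb, not_le.mp hlt, h⟩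
        rcases hu.eq_or_lt with h' | h'
        · exact ⟨b, h' ▸ h⟩
        · exact ⟨0, h.zero_of_lt h'⟩
    refine ⟨fun N => - (a m * φ N ^ m), fun N => w m + m * e N, fun N => ?_, hv, ?_⟩
    · exact neg_ne_zero.mpr (mul_ne_zero (ha m hm) (pow_ne_zero _ (hφ N)))
    · refine eventually_atTop.mpr ⟨N0, fun N hN => ?_⟩
      obtain ⟨b, hb⟩ := hB (N + 1) (by omega)
      have h1 := (hb.zero_of_lt (hv (Nat.lt_succ_self N))).sub (hN0 N hN)
      rw [zero_sub] at h1
      exact h1.congr fun t _ => by ring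

/-- Pseudo-expansion in powers of `G`. -/
lemma expand {R : Type*} [CommRing R] [IsDomain R] (G : Polynomial R) (hd : 1 ≤ G.natDegree) :
    ∀ (d : ℕ) (F : Polynomial R), F.natDegree ≤ d → ∃ c : R, c ≠ 0 ∧ ∃ S : Polynomial (Polynomial R),
      (∀ i, (S.coeff i).natDegree < G.natDegree) ∧ Polynomial.C c * F = S.eval G := by
  have hG : G.leadingCoeff ≠ 0 := by
    rw [Ne, Polynomial.leadingCoeff_eq_zero]; rintro rfl; simp at hd
  have small : ∀ F : Polynomial R, F.natDegree < G.natDegree → ∃ c : R, c ≠ 0 ∧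
      ∃ S : Polynomial (Polynomial R),
      (∀ i, (S.coeff i).natDegree < G.natDegree) ∧ Polynomial.C c * F = S.eval G := by
    intro F hF
    refine ⟨1, one_ne_zero, Polynomial.C F, fun i => ?_, by simp⟩
    rw [Polynomial.coeff_C]
    split_ifs
    · exact hF
    · simp; omega
  intro d
  induction d with
  | zero =>
    intro F hF
    exact small F (by omega)
  | succ d ih =>
    intro F hF
    by_cases hlt : F.natDegree < G.natDegree
    · exact small F hlt
    push Not at hlt
    set k := F.natDegree - G.natDegree with hk
    set H : Polynomial R := Polynomial.C F.leadingCoeff * Polynomial.X ^ k with hH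
    have hHd : H.natDegree ≤ d :=
      (Polynomial.natDegree_C_mul_X_pow_le _ _).trans (by omega)
    have hF1 : (Polynomial.C G.leadingCoeff * F - H * G).natDegree ≤ d := by
      rw [Polynomial.natDegree_le_iff_coeff_eq_zero]
      intro n hn
      have e1 : (H * G).coeff n = F.leadingCoeff * (if k ≤ n then G.coeff (n - k) else 0) := by
        rw [hH, mul_assoc, Polynomial.coeff_C_mul, Polynomial.coeff_X_pow_mul']
      rw [Polynomial.coeff_sub, Polynomial.coeff_C_mul, e1, if_pos (by omega)]
      by_cases hn2 : n = F.natDegree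
      · have : n - k = G.natDegree := by omega
        rw [this, hn2]
        simp only [Polynomial.leadingCoeff]; ring
      · rw [Polynomial.coeff_eq_zero_of_natDegree_lt (p := F) (by omega),
          Polynomial.coeff_eq_zero_of_natDegree_lt (p := G) (by omega)]
        ring
    obtain ⟨c1, hc1, S1, hS1, h1⟩ := ih _ hF1
    obtain ⟨c2, hc2, S2, hS2, h2⟩ := ih _ hHd
    refine ⟨c1 * c2 * G.leadingCoeff, mul_ne_zero (mul_ne_zero hc1 hc2) hG,
      Polynomial.C (Polynomial.C c2) * S1 + Polynomial.C (Polynomial.C c1) * (Polynomial.X * S2),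
      fun i => ?_, ?_⟩
    · rw [Polynomial.coeff_add, Polynomial.coeff_C_mul, Polynomial.coeff_C_mul]
      refine lt_of_le_of_lt (Polynomial.natDegree_add_le _ _) (max_lt ?_ ?_)
      · exact (Polynomial.natDegree_C_mul_le _ _).trans_lt (hS1 i)
      · refine (Polynomial.natDegree_C_mul_le _ _).trans_lt ?_
        cases i with
        | zero => simp; omega
        | succ i => rw [Polynomial.coeff_X_mul]; exact hS2 i
    · simp only [Polynomial.eval_add, Polynomial.eval_mul, Polynomial.eval_C, Polynomial.eval_X,
        ← h1, ← h2, map_mul]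
      ring

/-- Structure of leading terms of all nonzero polynomials along the partial sums. -/
lemma leading_terms (φ e : ℕ → ℝ) (hφ : ∀ k, φ k ≠ 0) (he : StrictMono e) :
    ∃ A h : ℕ → ℝ, (∀ N, A N ≠ 0) ∧ StrictMono h ∧ ∀ F : Polynomial (Polynomial ℝ), F ≠ 0 →
      ∃ (m : ℕ) (r u : ℝ), r ≠ 0 ∧
        ∀ᶠ N in atTop, LTm (ev (PS φ e N) F) (r * A N ^ m) (u + m * h N) := by
  classical
  by_cases hall : ∀ F : Polynomial (Polynomial ℝ), F ≠ 0 → TypeA φ e F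
  · refine ⟨fun _ => 1, fun N => N, fun _ => one_ne_zero, Nat.strictMono_cast, fun F hF => ?_⟩
    obtain ⟨a, w, ha, h⟩ := hall F hF
    exact ⟨0, a, w, ha, by simpa using h⟩
  push Not at hall
  have hex : ∃ d, ∃ G : Polynomial (Polynomial ℝ), G.natDegree = d ∧ G ≠ 0 ∧ ¬ TypeA φ e G := by
    obtain ⟨G, h1, h2⟩ := hall
    exact ⟨_, G, rfl, h1, h2⟩
  obtain ⟨G, hGd, hG, hGA⟩ := Nat.find_spec hex
  have hlow : ∀ F : Polynomial (Polynomial ℝ), F ≠ 0 → F.natDegree < G.natDegree →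
      TypeA φ e F := by
    intro F hF hlt
    by_contra hc
    exact Nat.find_min hex (hGd ▸ hlt) ⟨F, rfl, hF, hc⟩
  have hd : 1 ≤ G.natDegree := by
    by_contra hlt
    exact hGA (typeA_const φ e G hG (by omega))
  obtain ⟨A, h, hA, hh, hT⟩ := min_case φ e hφ he G hG hlow hGA
  refine ⟨A, h, hA, hh, fun F hF => ?_⟩
  obtain ⟨c, hc, S, hS, hexp⟩ := expand G hd _ F le_rfl
  have hS0 : S ≠ 0 := by
    rintro rfl
    rw [Polynomial.eval_zero, mul_eq_zero] at hexp
    rcases hexp with h | h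
    · exact hc (Polynomial.C_eq_zero.mp h)
    · exact hF h
  have hSA : ∀ i ∈ S.support, TypeA φ e (S.coeff i) := fun i hi =>
    hlow _ (Polynomial.mem_support_iff.mp hi) (hS i)
  choose! r u hr hrT using hSA
  obtain ⟨c0, k, hc0, hcT⟩ := lead_poly c hc
  obtain ⟨m, hm, hdom⟩ := aff_dom hh u S.support (Polynomial.support_nonempty.mpr hS0)
  refine ⟨m, r m / c0, u m - k, div_ne_zero (hr m hm) hc0, ?_⟩
  have hrT' := (Filter.eventually_all_finset S.support).mpr hrT
  filter_upwards [hT, hrT', hdom] with N h1 h2 h3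
  have h4 := LTm.sum_dom S.support
    (f := fun i t => ev (PS φ e N) (S.coeff i) t * (ev (PS φ e N) G t) ^ i)
    (a := fun i => r i * A N ^ i) (w := fun i => u i + i * h N) hm
    (fun i hi => (h2 i hi).mul (h1.pow i)) h3
  have h5 : LTm (fun t => c.eval t * ev (PS φ e N) F t) (r m * A N ^ m) (u m + m * h N) := by
    refine h4.congr fun t _ => ?_
    have := congrArg (fun P => ev (PS φ e N) P t) hexp
    simp only [ev, Polynomial.eval₂_mul, Polynomial.eval₂_C, Polynomial.coe_evalRingHom] at this
    simp only [ev]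
    rw [this, Polynomial.eval_eq_sum, Polynomial.sum, Polynomial.eval₂_finsetSum]
    simp only [Polynomial.eval₂_mul, Polynomial.eval₂_pow]
  have h6 := h5.div hcT hc0
  have e1 : r m / c0 * A N ^ m = r m * A N ^ m / c0 := by ring
  have e2 : u m - k + m * h N = u m + m * h N - k := by ring
  rw [e1, e2]
  refine Tendsto.congr' ?_ h6
  have hne : ∀ᶠ t in 𝓝[>] (0 : ℝ), c.eval t ≠ 0 := by
    filter_upwards [hcT.eventually_ne hc0] with t ht h0
    simp [h0] at ht
  filter_upwards [hne] with t ht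
  field_simp

/-- Translation of a two-variable polynomial to `ℝ[t][s]`. -/
noncomputable def trn (x₀ y₀ : ℝ) (p : MvPolynomial (Fin 2) ℝ) : Polynomial (Polynomial ℝ) :=
  MvPolynomial.aeval ![Polynomial.C (Polynomial.X + Polynomial.C x₀),
    Polynomial.X + Polynomial.C (Polynomial.C y₀)] p

lemma ev_trn (x₀ y₀ : ℝ) (p : MvPolynomial (Fin 2) ℝ) (Φ : ℝ → ℝ) (t : ℝ) :
    ev Φ (trn x₀ y₀ p) t = pev p (x₀ + t, y₀ + Φ t) := by
  unfold ev trn pev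
  induction p using MvPolynomial.induction_on with
  | C a =>
    simp [Polynomial.algebraMap_apply]
  | add p q hp hq => rw [map_add, Polynomial.eval₂_add, hp, hq, map_add]
  | mul_X p i hp =>
    rw [map_mul, Polynomial.eval₂_mul, hp, map_mul]
    congr 1
    fin_cases i <;> simp [add_comm]
/-- If `L N` is the right-sided limit of a bounded rational function along the `N`-th
partial sum curve of a series of type (ii), then the sequence `(L N)` converges. -/
theorem partial_sum_curve_limits_converge (p q : MvPolynomial (Fin 2) ℝ) (hq : q ≠ 0)
    (hcop : ∀ d : MvPolynomial (Fin 2) ℝ, d ∣ p → d ∣ q → IsUnit d) (x₀ y₀ : ℝ)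
    (hb : BoundedNear p q (x₀, y₀))
    (φ : ℕ → ℝ) (e : ℕ → ℚ) (hφ : ∀ k, φ k ≠ 0) (he : StrictMono e) (h1 : 1 ≤ e 0)
    (L : ℕ → ℝ)
    (hL : ∀ N : ℕ, 1 ≤ N →
      Tendsto (fun x =>
          pev p (x, y₀ + ∑ k ∈ Finset.range N, φ k * |x - x₀| ^ ((e k : ℝ))) /
          pev q (x, y₀ + ∑ k ∈ Finset.range N, φ k * |x - x₀| ^ ((e k : ℝ))))
        (𝓝[>] x₀) (𝓝 (L N))) :
    ∃ l : ℝ, Tendsto L atTop (𝓝 l) := by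
  have he' : StrictMono (fun k => (e k : ℝ)) := fun i j hij => by
    have := he hij
    simp only; exact_mod_cast this
  set E : ℕ → ℝ := fun k => (e k : ℝ) with hE
  set P := trn x₀ y₀ p
  set Q := trn x₀ y₀ q
  have hf : ∀ N, 1 ≤ N → LTm (fun t => ev (PS φ E N) P t / ev (PS φ E N) Q t) (L N) 0 := by
    intro N hN
    have hmap : Tendsto (fun t : ℝ => x₀ + t) (𝓝[>] 0) (𝓝[>] x₀) := by
      refine tendsto_nhdsWithin_iff.mpr ⟨?_, ?_⟩
      · have : Tendsto (fun t : ℝ => x₀ + t) (𝓝 0) (𝓝 (x₀ + 0)) :=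
          (continuous_const.add continuous_id).tendsto 0
        rw [add_zero] at this
        exact this.mono_left nhdsWithin_le_nhds
      · filter_upwards [self_mem_nhdsWithin] with t ht
        have ht : 0 < t := ht
        simpa using ht
    refine Tendsto.congr' ?_ ((hL N hN).comp hmap)
    filter_upwards [self_mem_nhdsWithin] with t ht
    have ht : 0 < t := ht
    simp only [P, Q, ev_trn, PS, Function.comp, add_sub_cancel_left, abs_of_pos ht, neg_zero,
      Real.rpow_zero, mul_one, hE]
  have zero_case : (∀ N, ∀ t, 0 < t → ev (PS φ E N) P t / ev (PS φ E N) Q t = 0) →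
      ∃ l : ℝ, Tendsto L atTop (𝓝 l) := by
    intro h0
    refine ⟨0, tendsto_const_nhds.congr' ?_⟩
    filter_upwards [eventually_ge_atTop 1] with N hN
    exact (LTm.const 0).unique ((hf N hN).congr (h0 N))
  by_cases hP : P = 0
  · exact zero_case fun N t _ => by simp [hP, ev]
  by_cases hQ : Q = 0
  · exact zero_case fun N t _ => by simp [hQ, ev]
  obtain ⟨A, h, hA, hh, H⟩ := leading_terms φ E hφ he'
  obtain ⟨m, r, u, hr, hPT⟩ := H P hP
  obtain ⟨n, s, v, hs, hQT⟩ := H Q hQ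
  have key : ∀ᶠ N in atTop, LTm (fun t => ev (PS φ E N) P t / ev (PS φ E N) Q t) (L N) 0 ∧
      LTm (fun t => ev (PS φ E N) P t / ev (PS φ E N) Q t) (r * A N ^ m / (s * A N ^ n))
        (u + m * h N - (v + n * h N)) := by
    filter_upwards [hPT, hQT, eventually_ge_atTop 1] with N h2 h3 h4
    exact ⟨hf N h4, h2.div h3 (mul_ne_zero hs (pow_ne_zero _ (hA N)))⟩
  have zero_ev : (∀ᶠ N in atTop, u + m * h N ≠ v + n * h N) → ∃ l : ℝ, Tendsto L atTop (𝓝 l) := by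
    intro hne
    refine ⟨0, tendsto_const_nhds.congr' ?_⟩
    filter_upwards [key, hne] with N ⟨k1, k2⟩ k3
    rcases lt_or_gt_of_ne k3 with k4 | k4
    · exfalso
      have := (k1.zero_of_lt (sub_neg.mpr k4)).unique k2
      exact div_ne_zero (mul_ne_zero hr (pow_ne_zero _ (hA N)))
        (mul_ne_zero hs (pow_ne_zero _ (hA N))) this.symm
    · exact (k2.zero_of_lt (sub_pos.mpr k4)).unique k1
  rcases lt_trichotomy m n with hmn | hmn | hmn
  · apply zero_ev
    rcases aff_pair hh u v m n hmn with h5 | h5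
    · exact h5.mono fun N hN => hN.ne
    · exact h5.mono fun N hN => hN.ne'
  · subst hmn
    by_cases huv : u = v
    · subst huv
      refine ⟨r / s, tendsto_const_nhds.congr' ?_⟩
      filter_upwards [key] with N ⟨k1, k2⟩
      rw [sub_self, mul_div_mul_right _ _ (pow_ne_zero _ (hA N))] at k2
      exact k2.unique k1
    · apply zero_ev
      exact Eventually.of_forall fun N hN => huv (by linarith)
  · apply zero_ev
    rcases aff_pair hh v u n m hmn with h5 | h5
    · exact h5.mono fun N hN => hN.ne'
    · exact h5.mono fun N hN => hN.ne
end
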